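/- arXiv:cs/0304041 — 4 statements merged into one kernel-verified Lean document; each statement's English description precedes it below -/
import Mathlib

section
/- Let f be an unsatisfiable CNF formula and let G be the graph representation of a Resolution refutation of f. Then for every node u of G and every variable x_i: if the literal x_i appears in the clause u then x_i ∈ Zeros(u), and if the literal ¬x_i appears in the clause u then x_i ∈ Ones(u). -/
/-!
Follow a path from the root to `u` backwards from `u`, where the clause contains a literal on the
variable `x`. Passing from a child to its parent, that literal survives as long as the parent is
not labelled `x`. Since the root clause is empty, the literal must disappear somewhere, so some
node of the path is labelled `x`. At the last such node, the child on the path still contains the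
literal; the child along the edge `0` contains `x` and the one along the edge `1` contains `¬x`,
so, clauses being non-tautological, the edge taken is determined by the sign of the literal.
`ResolutionProof.Path.mem_or_evaluates` is this argument for a path with an arbitrary start.
-/

/-- A clause over variables of type `V`: a finite set of literals, where a literal
is a pair `(x, b)`; `(x, true)` is the literal `x` and `(x, false)` is `¬x`. -/
abbrev Clause (V : Type) := Finset (V × Bool)

/-- An assignment `α` satisfies a clause `C` if it makes some literal of `C` true. -/
def satClause {V : Type} (α : V → Bool) (C : Clause V) : Prop :=
  ∃ l ∈ C, α l.1 = l.2

/-- An assignment satisfies a CNF formula (a finite set of clauses) if it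
satisfies every clause. -/
def satCNF {V : Type} (α : V → Bool) (f : Finset (Clause V)) : Prop :=
  ∀ C ∈ f, satClause α C

/-- A CNF formula is unsatisfiable if no assignment satisfies it. -/
def Unsat {V : Type} (f : Finset (Clause V)) : Prop :=
  ¬ ∃ α : V → Bool, satCNF α f

/-- A Resolution refutation of the CNF formula `f`, given together with its
graph (dag) representation: a sequence of clauses `clause 0, ..., clause (size-1)`
where each clause is either a clause of `f` (a leaf, `step u = none`) or the
resolvent of two earlier clauses (`step u = some (x, a, b)`: the clause `u` is
obtained by resolving clause `a` (containing the literal `x`) and clause `b`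
(containing the literal `¬x`) on the variable `x`); the last clause (the root)
is the empty clause. The length of the refutation is `size`. -/
structure ResolutionProof {V : Type} [DecidableEq V] (f : Finset (Clause V)) where
  size : ℕ
  size_pos : 0 < size
  clause : Fin size → Clause V
  step : Fin size → Option (V × Fin size × Fin size)
  step_axiom : ∀ u, step u = none → clause u ∈ f
  step_lt : ∀ u x a b, step u = some (x, a, b) → (a : ℕ) < (u : ℕ) ∧ (b : ℕ) < (u : ℕ)
  step_res : ∀ u x a b, step u = some (x, a, b) →
    (x, true) ∈ clause a ∧ (x, false) ∈ clause b ∧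
    clause u = (clause a).erase (x, true) ∪ (clause b).erase (x, false)
  last_empty : clause ⟨size - 1, Nat.sub_lt size_pos Nat.one_pos⟩ = ∅

namespace ResolutionProof

variable {V : Type} [DecidableEq V] {f : Finset (Clause V)}

/-- The root of the dag: the last clause (the empty clause). -/
def root (P : ResolutionProof f) : Fin P.size :=
  ⟨P.size - 1, Nat.sub_lt P.size_pos Nat.one_pos⟩

/-- The variable labelling a (non-leaf) node: the variable resolved upon there. -/
def label (P : ResolutionProof f) (u : Fin P.size) : Option V :=
  (P.step u).map Prod.fst

/-- `P.Path u w p` : `p` is a directed path in the dag from `u` to `w`, recorded as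
the list of (node, label of the outgoing edge taken) pairs: from a node labelled
`x`, the edge labelled `false` (i.e. 0) leads to the child containing the literal
`x`, and the edge labelled `true` (i.e. 1) leads to the child containing `¬x`. -/
inductive Path (P : ResolutionProof f) :
    Fin P.size → Fin P.size → List (Fin P.size × Bool) → Prop
  | nil (u : Fin P.size) : Path P u u []
  | cons {u v w : Fin P.size} {x : V} {a b : Fin P.size} {bl : Bool}
      {rest : List (Fin P.size × Bool)}
      (hstep : P.step u = some (x, a, b))
      (hv : v = if bl then b else a)
      (hrest : Path P v w rest) : Path P u w ((u, bl) :: rest)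

/-- A path `p` evaluates the variable `x` to `bl` if some node on `p` is labelled
`x`, and after the last node on `p` labelled `x` the path follows the outgoing
edge labelled `bl`. -/
def Evaluates (P : ResolutionProof f) (p : List (Fin P.size × Bool))
    (x : V) (bl : Bool) : Prop :=
  ∃ i, ∃ hi : i < p.length,
    P.label (p.get ⟨i, hi⟩).1 = some x ∧ (p.get ⟨i, hi⟩).2 = bl ∧
    ∀ j, ∀ hj : j < p.length, i < j → P.label (p.get ⟨j, hj⟩).1 ≠ some x

/-- `Zeros(u)`: the set of variables evaluated to 0 by every path from the root to `u`. -/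
def Zeros (P : ResolutionProof f) (u : Fin P.size) : Set V :=
  {x | ∀ p, P.Path P.root u p → P.Evaluates p x false}

/-- `Ones(u)`: the set of variables evaluated to 1 by every path from the root to `u`. -/
def Ones (P : ResolutionProof f) (u : Fin P.size) : Set V :=
  {x | ∀ p, P.Path P.root u p → P.Evaluates p x true}

/-- A refutation is Regular if along every directed path in its dag each
variable is resolved upon at most once. -/
def Regular (P : ResolutionProof f) : Prop :=
  ∀ u w p, P.Path u w p → (p.map fun s => P.label s.1).Nodup

end ResolutionProof

/-- The pigeon clause `x_{i,1} ∨ ... ∨ x_{i,n}`: pigeon `i` maps to some hole. -/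
def pigeonClause (n i : ℕ) : Clause (ℕ × ℕ) :=
  (Finset.Icc 1 n).image fun j => ((i, j), true)

/-- The hole clause `¬x_{i1,j} ∨ ¬x_{i2,j}`: pigeons `i1` and `i2` do not both
map to hole `j`. -/
def holeClause (j i1 i2 : ℕ) : Clause (ℕ × ℕ) :=
  {((i1, j), false), ((i2, j), false)}

/-- The functionality clause `¬x_{i,j1} ∨ ¬x_{i,j2}`: pigeon `i` does not map to
both hole `j1` and hole `j2`. -/
def funcClause (i j1 j2 : ℕ) : Clause (ℕ × ℕ) :=
  {((i, j1), false), ((i, j2), false)}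

/-- The onto clause `x_{1,j} ∨ ... ∨ x_{m,j}`: hole `j` is occupied. -/
def ontoClause (m j : ℕ) : Clause (ℕ × ℕ) :=
  (Finset.Icc 1 m).image fun i => ((i, j), true)

/-- The CNF formula `¬WPHP^m_n`: the conjunction of all pigeon clauses and hole
clauses, over variables `x_{i,j}` for `1 ≤ i ≤ m`, `1 ≤ j ≤ n`. -/
def WPHPneg (m n : ℕ) : Finset (Clause (ℕ × ℕ)) :=
  ((Finset.Icc 1 m).image fun i => pigeonClause n i) ∪
  (((Finset.Icc 1 m ×ˢ Finset.Icc 1 m ×ˢ Finset.Icc 1 n).filter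
      fun t => t.1 < t.2.1).image fun t => holeClause t.2.2 t.1 t.2.1)

/-- The CNF formula `¬FWPHP^m_n` (weak functional PHP): additionally each pigeon
goes to exactly one hole. -/
def FWPHPneg (m n : ℕ) : Finset (Clause (ℕ × ℕ)) :=
  WPHPneg m n ∪
  (((Finset.Icc 1 m ×ˢ Finset.Icc 1 n ×ˢ Finset.Icc 1 n).filter
      fun t => t.2.1 < t.2.2).image fun t => funcClause t.1 t.2.1 t.2.2)

/-- The CNF formula `¬FOWPHP^m_n` (weak functional onto PHP): additionally every
hole is occupied. -/
def FOWPHPneg (m n : ℕ) : Finset (Clause (ℕ × ℕ)) :=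
  FWPHPneg m n ∪ ((Finset.Icc 1 n).image fun j => ontoClause m j)

namespace ResolutionProof

variable {V : Type} [DecidableEq V] {f : Finset (Clause V)}

theorem Evaluates.cons {P : ResolutionProof f} {p : List (Fin P.size × Bool)} {x : V} {c : Bool}
    (h : P.Evaluates p x c) (s : Fin P.size × Bool) : P.Evaluates (s :: p) x c := by
  obtain ⟨i, hi, h1, h2, h3⟩ := h
  refine ⟨i + 1, by simpa using hi, by simpa using h1, by simpa using h2, ?_⟩
  rintro (_ | j) hj hij
  · omega
  · simpa using h3 j (by simpa using hj) (by omega)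

/-- If the clause at the end of a path contains a literal on `x`, then either the literal is
already in the starting clause and `x` is never resolved upon along the path, or the path
evaluates `x` to the value falsifying the literal. -/
theorem Path.mem_or_evaluates {P : ResolutionProof f}
    (hnotaut : ∀ u : Fin P.size, ∀ x : V,
      ¬((x, true) ∈ P.clause u ∧ (x, false) ∈ P.clause u))
    {u w : Fin P.size} {p : List (Fin P.size × Bool)} (hp : P.Path u w p)
    {x : V} {c : Bool} (hx : (x, c) ∈ P.clause w) :
    ((x, c) ∈ P.clause u ∧ ∀ s ∈ p, P.label s.1 ≠ some x) ∨ P.Evaluates p x (!c) := by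
  induction hp with
  | nil u => exact Or.inl ⟨hx, by simp⟩
  | @cons u v w y a b bl rest hstep hv hrest ih =>
    rcases ih hx with ⟨hmem, hlab⟩ | hev
    · obtain ⟨ha, hb, hu⟩ := P.step_res u y a b hstep
      have hl : P.label u = some y := by simp [label, hstep]
      by_cases hxy : y = x
      · subst hxy
        have hbl : bl = !c := by
          have hna := hnotaut a y
          have hnb := hnotaut b y
          cases bl <;> cases c <;> simp_all
        refine Or.inr ⟨0, by simp, by simpa using hl, by simpa using hbl, ?_⟩
        rintro (_ | j) hj hij
        · omega
        · simpa using hlab _ (List.getElem_mem (by simpa using hj))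
      · refine Or.inl ⟨?_, ?_⟩
        · have hxy' : x ≠ y := fun h => hxy h.symm
          cases bl <;> simp_all
        · intro s hs
          rcases List.mem_cons.1 hs with rfl | hs
          · simpa [hl] using hxy
          · exact hlab s hs
    · exact Or.inr (hev.cons _)

theorem Path.evaluates_of_root {P : ResolutionProof f}
    (hnotaut : ∀ u : Fin P.size, ∀ x : V,
      ¬((x, true) ∈ P.clause u ∧ (x, false) ∈ P.clause u))
    {u : Fin P.size} {p : List (Fin P.size × Bool)} (hp : P.Path P.root u p)
    {x : V} {c : Bool} (hx : (x, c) ∈ P.clause u) : P.Evaluates p x (!c) := by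
  have hroot : P.clause P.root = ∅ := P.last_empty
  rcases hp.mem_or_evaluates hnotaut hx with ⟨h, -⟩ | h
  · simp [hroot] at h
  · exact h

end ResolutionProof

/-- for every node `u` of a Resolution refutation of an
unsatisfiable CNF `f` (in which no clause contains both a variable and its
negation) and every variable `x`: if the literal `x` appears in the clause `u`
then `x ∈ Zeros(u)`, and if the literal `¬x` appears in the clause `u` then
`x ∈ Ones(u)`. -/
theorem literal_in_zeros_ones {V : Type} [DecidableEq V]
    (f : Finset (Clause V)) (hf : Unsat f) (P : ResolutionProof f)
    (hnotaut : ∀ u : Fin P.size, ∀ x : V,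
      ¬((x, true) ∈ P.clause u ∧ (x, false) ∈ P.clause u))
    (u : Fin P.size) (x : V) :
    ((x, true) ∈ P.clause u → x ∈ P.Zeros u) ∧
    ((x, false) ∈ P.clause u → x ∈ P.Ones u) := by
  exact ⟨fun h _ hp => hp.evaluates_of_root hnotaut h,
    fun h _ hp => hp.evaluates_of_root hnotaut h⟩
end

section
/- There exist a constant c > 0 and a natural number k such that for every n ≥ 1 the CNF formula ¬PHP_n (that is, ¬WPHP^{n+1}_n) has a Regular Resolution refutation of length at most c · 2^n · n^k. -/
/-! ### Regular derivations as closed sets of nodes -/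

/-- A finite set of nodes `(C, W)` closed under premises: each `C` is a clause of `f`, or the
resolvent on some `x ∈ W` of two nodes of the set whose variable sets lie in `W \ {x}`.
Consequently `W` bounds the variables resolved upon at or below the node. -/
def RegClosed {V : Type} [DecidableEq V] (f : Finset (Clause V))
    (G : Finset (Clause V × Finset V)) : Prop :=
  ∀ u ∈ G, u.1 ∈ f ∨ ∃ x, ∃ a ∈ G, ∃ b ∈ G, x ∈ u.2 ∧ a.2 ⊆ u.2.erase x ∧ b.2 ⊆ u.2.erase x ∧
    (x, true) ∈ a.1 ∧ (x, false) ∈ b.1 ∧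
    u.1 = a.1.erase (x, true) ∪ b.1.erase (x, false)

/-- Some node of `G` has a clause contained in `K` and a variable set contained in `W`. -/
def Derived {V : Type} (G : Finset (Clause V × Finset V)) (K : Clause V) (W : Finset V) : Prop :=
  ∃ u ∈ G, u.1 ⊆ K ∧ u.2 ⊆ W

theorem Derived.mono {V : Type} {G G' : Finset (Clause V × Finset V)} {K K' : Clause V}
    {W W' : Finset V} (h : Derived G K W) (hG : G ⊆ G') (hK : K ⊆ K') (hW : W ⊆ W') :
    Derived G' K' W' := by
  obtain ⟨u, hu, h1, h2⟩ := h
  exact ⟨u, hG hu, h1.trans hK, h2.trans hW⟩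

/-- A closed set containing the empty clause yields a regular refutation: keep the root and the
nodes with a smaller variable set, and list them by increasing size of the variable set. -/
theorem exists_regular_of_regClosed {V : Type} [DecidableEq V] {f : Finset (Clause V)}
    {G : Finset (Clause V × Finset V)} (hG : RegClosed f G) {W₀ : Finset V}
    (h0 : ((∅ : Clause V), W₀) ∈ G) :
    ∃ P : ResolutionProof f, P.Regular ∧ P.size ≤ G.card := by
  classical
  set H := G.filter (fun u => u.2.card < W₀.card ∨ u = (∅, W₀)) with hH
  have hroot : ((∅ : Clause V), W₀) ∈ H := by simp [hH, h0]
  have hle : ∀ u ∈ H, u.2.card ≤ W₀.card := by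
    intro u hu
    rcases (Finset.mem_filter.1 hu).2 with h | h
    · exact h.le
    · rw [h]
  have key : ∀ u : H, ∃ s : Option (V × H × H), (s = none → u.1.1 ∈ f) ∧
      ∀ x a b, s = some (x, a, b) → x ∈ u.1.2 ∧ a.1.2 ⊆ u.1.2.erase x ∧ b.1.2 ⊆ u.1.2.erase x ∧
        (x, true) ∈ a.1.1 ∧ (x, false) ∈ b.1.1 ∧
        u.1.1 = a.1.1.erase (x, true) ∪ b.1.1.erase (x, false) := by
    rintro ⟨u, hu⟩
    rcases hG u (Finset.mem_filter.1 hu).1 with h | ⟨x, a, ha, b, hb, hx, haW, hbW, h1, h2, h3⟩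
    · exact ⟨none, fun _ => h, by simp⟩
    · have hlt : (u.2.erase x).card < W₀.card :=
        (Finset.card_erase_lt_of_mem hx).trans_le (hle u hu)
      have haH : a ∈ H :=
        Finset.mem_filter.2 ⟨ha, Or.inl ((Finset.card_le_card haW).trans_lt hlt)⟩
      have hbH : b ∈ H :=
        Finset.mem_filter.2 ⟨hb, Or.inl ((Finset.card_le_card hbW).trans_lt hlt)⟩
      refine ⟨some (x, ⟨a, haH⟩, ⟨b, hbH⟩), by simp, ?_⟩
      intro x' a' b' h
      simp only [Option.some.injEq, Prod.mk.injEq] at h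
      obtain ⟨rfl, rfl, rfl⟩ := h
      exact ⟨hx, haW, hbW, h1, h2, h3⟩
  choose st hst1 hst2 using key
  obtain ⟨e, he⟩ : ∃ e : Fin H.card ≃ H, Monotone fun i => (e i).1.2.card := by
    let r : Fin H.card → ℕ := fun i => (H.equivFin.symm i).1.2.card
    exact ⟨(Tuple.sort r).trans H.equivFin.symm, Tuple.monotone_sort r⟩
  have hpos : 0 < H.card := Finset.card_pos.2 ⟨_, hroot⟩
  have hlt : ∀ (u : H) (x : V) (a : H), x ∈ u.1.2 → a.1.2 ⊆ u.1.2.erase x →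
      e.symm a < e.symm u := by
    intro u x a hx ha
    by_contra! hcon
    have h1 := he hcon
    simp only [Equiv.apply_symm_apply] at h1
    have h2 := Finset.card_le_card ha
    have h3 := Finset.card_erase_lt_of_mem hx
    omega
  have hstep : ∀ (u : Fin H.card) (x : V) (a b : Fin H.card),
      (st (e u)).map (fun t => (t.1, e.symm t.2.1, e.symm t.2.2)) = some (x, a, b) →
      st (e u) = some (x, e a, e b) := by
    intro u x a b h
    rw [Option.map_eq_some_iff] at h
    obtain ⟨⟨x', a', b'⟩, h1, h2⟩ := h
    simp only [Prod.mk.injEq] at h2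
    obtain ⟨rfl, rfl, rfl⟩ := h2
    simpa using h1
  let P : ResolutionProof f :=
    { size := H.card
      size_pos := hpos
      clause := fun u => (e u).1.1
      step := fun u => (st (e u)).map (fun t => (t.1, e.symm t.2.1, e.symm t.2.2))
      step_axiom := fun u h => hst1 _ (by simpa using h)
      step_lt := by
        intro u x a b h
        obtain ⟨hx, ha, hb, -⟩ := hst2 _ _ _ _ (hstep u x a b h)
        have h1 := hlt _ _ _ hx ha
        have h2 := hlt _ _ _ hx hb
        simp only [Equiv.symm_apply_apply] at h1 h2
        exact ⟨h1, h2⟩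
      step_res := by
        intro u x a b h
        obtain ⟨-, -, -, h1⟩ := hst2 _ _ _ _ (hstep u x a b h)
        exact h1
      last_empty := by
        -- The last node has at least as many variables as the root, so it is the root.
        have h1 : e.symm ⟨_, hroot⟩ ≤ ⟨H.card - 1, Nat.sub_lt hpos Nat.one_pos⟩ := by
          rw [Fin.le_def]
          have := (e.symm ⟨_, hroot⟩).2
          simp only
          omega
        have h2 := he h1
        simp only [Equiv.apply_symm_apply] at h2
        rcases (Finset.mem_filter.1 (e ⟨H.card - 1, Nat.sub_lt hpos Nat.one_pos⟩).2).2 with h | h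
        · omega
        · rw [h] }
  have hreg : ∀ u w p, P.Path u w p →
      (∀ s ∈ p, ∃ x ∈ (e u).1.2, P.label s.1 = some x) ∧
        (p.map fun s => P.label s.1).Nodup := by
    intro u w p hp
    induction hp with
    | nil u => simp
    | @cons u v w x a b bl rest hs hv hrest ih =>
      obtain ⟨hx, ha, hb, -⟩ := hst2 _ _ _ _ (hstep u x a b hs)
      have hsub : (e v).1.2 ⊆ (e u).1.2.erase x := by
        rw [hv]
        cases bl
        · exact ha
        · exact hb
      have hlab : P.label u = some x := by
        unfold ResolutionProof.label
        rw [hs]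
        rfl
      refine ⟨?_, ?_⟩
      · intro s hsm
        rcases List.mem_cons.1 hsm with rfl | hsm
        · exact ⟨x, hx, hlab⟩
        · obtain ⟨y, hy, hy'⟩ := ih.1 s hsm
          exact ⟨y, Finset.mem_of_mem_erase (hsub hy), hy'⟩
      · rw [List.map_cons, List.nodup_cons]
        refine ⟨?_, ih.2⟩
        intro hmem
        obtain ⟨s, hsm, hse⟩ := List.mem_map.1 hmem
        obtain ⟨y, hy, hy'⟩ := ih.1 s hsm
        have hxy : y = x := by
          have := hse.symm.trans hy'
          rw [hlab] at this
          exact (Option.some.inj this).symm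
        exact Finset.ne_of_mem_erase (hsub hy) hxy
  exact ⟨P, fun u w p hp => (hreg u w p hp).2, Finset.card_le_card (Finset.filter_subset _ _)⟩

/-- One resolution step up to weakening: it adds at most one node, and none if the pivot is
missing from one of the premises. -/
theorem exists_resolve {V : Type} [DecidableEq V] {f : Finset (Clause V)}
    {G : Finset (Clause V × Finset V)} (hG : RegClosed f G) {K : Clause V} {W : Finset V} {x : V}
    (hx : x ∈ W) (ha : Derived G (insert (x, true) K) (W.erase x))
    (hb : Derived G (insert (x, false) K) (W.erase x)) :
    ∃ G', G ⊆ G' ∧ RegClosed f G' ∧ G'.card ≤ G.card + 1 ∧ Derived G' K W := by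
  obtain ⟨a, haG, ha1, ha2⟩ := ha
  obtain ⟨b, hbG, hb1, hb2⟩ := hb
  by_cases hxa : (x, true) ∈ a.1
  · by_cases hxb : (x, false) ∈ b.1
    · refine ⟨insert (a.1.erase (x, true) ∪ b.1.erase (x, false), W) G,
        Finset.subset_insert _ _, ?_, Finset.card_insert_le _ _, ?_⟩
      · intro u hu
        rcases Finset.mem_insert.1 hu with rfl | hu
        · exact Or.inr ⟨x, a, Finset.mem_insert_of_mem haG, b, Finset.mem_insert_of_mem hbG,
            hx, ha2, hb2, hxa, hxb, rfl⟩
        · rcases hG u hu with h | ⟨y, c, hc, d, hd, h⟩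
          · exact Or.inl h
          · exact Or.inr ⟨y, c, Finset.mem_insert_of_mem hc, d, Finset.mem_insert_of_mem hd, h⟩
      · exact ⟨_, Finset.mem_insert_self _ _,
          Finset.union_subset (Finset.subset_insert_iff.1 ha1)
            (Finset.subset_insert_iff.1 hb1), subset_rfl⟩
    · exact ⟨G, subset_rfl, hG, Nat.le_succ _, b, hbG,
        (Finset.subset_insert_iff_of_notMem hxb).1 hb1, hb2.trans (Finset.erase_subset _ _)⟩
  · exact ⟨G, subset_rfl, hG, Nat.le_succ _, a, haG,
      (Finset.subset_insert_iff_of_notMem hxa).1 ha1, ha2.trans (Finset.erase_subset _ _)⟩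

/-- If each of the targets indexed by `S` costs at most `m` further nodes over any closed extension
of `G`, then all of them together cost at most `|S| * m`. -/
theorem exists_family {V ι : Type} [DecidableEq V] {f : Finset (Clause V)}
    {G : Finset (Clause V × Finset V)} (hG : RegClosed f G) (K : ι → Clause V) (W : ι → Finset V)
    (m : ℕ) (S : Finset ι)
    (h : ∀ s ∈ S, ∀ G₁, G ⊆ G₁ → RegClosed f G₁ →
      ∃ G', G₁ ⊆ G' ∧ RegClosed f G' ∧ G'.card ≤ G₁.card + m ∧ Derived G' (K s) (W s)) :
    ∃ G', G ⊆ G' ∧ RegClosed f G' ∧ G'.card ≤ G.card + S.card * m ∧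
      ∀ s ∈ S, Derived G' (K s) (W s) := by
  classical
  induction S using Finset.induction_on with
  | empty => exact ⟨G, subset_rfl, hG, by simp, by simp⟩
  | insert s S hs ih =>
    obtain ⟨G₁, h1, h2, h3, h4⟩ := ih (fun t ht => h t (Finset.mem_insert_of_mem ht))
    obtain ⟨G', h5, h6, h7, h8⟩ := h s (Finset.mem_insert_self _ _) G₁ h1 h2
    refine ⟨G', h1.trans h5, h6, ?_, ?_⟩
    · rw [Finset.card_insert_of_notMem hs, Nat.succ_mul]
      omega
    · intro t ht
      rcases Finset.mem_insert.1 ht with rfl | ht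
      · exact h8
      · exact (h4 t ht).mono h5 subset_rfl subset_rfl

/-! ### The derivation for the pigeonhole principle -/

/-- The positive clause `⋁ x_{p,q}` over `1 ≤ p ≤ i` and holes `q ∈ {1, ..., n} \ T`. -/
def outsideClause (n i : ℕ) (T : Finset ℕ) : Clause (ℕ × ℕ) :=
  (Finset.Icc 1 i ×ˢ (Finset.Icc 1 n \ T)).image fun v => (v, true)

theorem mem_outsideClause {n i : ℕ} {T : Finset ℕ} {l : (ℕ × ℕ) × Bool} :
    l ∈ outsideClause n i T ↔
      (1 ≤ l.1.1 ∧ l.1.1 ≤ i) ∧ ((1 ≤ l.1.2 ∧ l.1.2 ≤ n) ∧ l.1.2 ∉ T) ∧ l.2 = true := by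
  obtain ⟨⟨p, q⟩, c⟩ := l
  simp only [outsideClause, Finset.mem_image, Finset.mem_product, Finset.mem_Icc,
    Finset.mem_sdiff, Prod.mk.injEq, Prod.exists]
  constructor
  · rintro ⟨a, b, ⟨h1, h2⟩, ⟨rfl, rfl⟩, rfl⟩
    exact ⟨h1, h2, rfl⟩
  · rintro ⟨h1, h2, rfl⟩
    exact ⟨p, q, ⟨h1, h2⟩, ⟨rfl, rfl⟩, rfl⟩

theorem pigeonClause_mem {n i : ℕ} (h1 : 1 ≤ i) (h2 : i ≤ n + 1) :
    pigeonClause n i ∈ WPHPneg (n + 1) n :=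
  Finset.mem_union_left _ (Finset.mem_image.2 ⟨i, Finset.mem_Icc.2 ⟨h1, h2⟩, rfl⟩)

theorem holeClause_mem {n j p q : ℕ} (hp : 1 ≤ p) (hpq : p < q) (hq : q ≤ n + 1) (h1 : 1 ≤ j)
    (h2 : j ≤ n) : holeClause j p q ∈ WPHPneg (n + 1) n := by
  refine Finset.mem_union_right _ (Finset.mem_image.2 ⟨(p, q, j), ?_, rfl⟩)
  simp only [Finset.mem_filter, Finset.mem_product, Finset.mem_Icc]
  omega

/-- From "some pigeon `p ≤ i` is outside `T \ {j}`" and the hole clauses of `j`, derive "some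
pigeon `p ≤ i` is outside `T`, or pigeon `i + 1` is not in `j`". The intermediate clauses still
allow the pigeons `k < p ≤ i` to sit in `j`. -/
theorem exists_negHole {n i j : ℕ} {T : Finset ℕ} (hT : T ⊆ Finset.Icc 1 n) (hi : i ≤ n)
    (hj : j ∈ T) {G : Finset (Clause (ℕ × ℕ) × Finset (ℕ × ℕ))}
    (hG : RegClosed (WPHPneg (n + 1) n) G)
    (hax : ∀ C ∈ WPHPneg (n + 1) n, Derived G C ∅)
    (hd : Derived G (outsideClause n i (T.erase j)) (Finset.Icc 1 i ×ˢ T.erase j)) :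
    ∃ G', G ⊆ G' ∧ RegClosed (WPHPneg (n + 1) n) G' ∧ G'.card ≤ G.card + n ∧
      Derived G' (insert ((i + 1, j), false) (outsideClause n i T)) (Finset.Icc 1 i ×ˢ T) := by
  have hjn := Finset.mem_Icc.1 (hT hj)
  have key : ∀ k ≤ i, ∃ G', G ⊆ G' ∧ RegClosed (WPHPneg (n + 1) n) G' ∧ G'.card ≤ G.card + k ∧
      Derived G' (insert ((i + 1, j), false) (outsideClause n i T) ∪
          (Finset.Ioc k i).image (fun p => ((p, j), true)))
        (Finset.Icc 1 i ×ˢ T.erase j ∪ Finset.Icc 1 k ×ˢ {j}) := by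
    intro k
    induction k with
    | zero =>
      intro _
      refine ⟨G, subset_rfl, hG, le_rfl, hd.mono subset_rfl ?_ Finset.subset_union_left⟩
      rintro ⟨⟨p, q⟩, c⟩ hl
      simp only [mem_outsideClause, Finset.mem_erase, Finset.mem_union, Finset.mem_insert,
        Finset.mem_image, Finset.mem_Ioc, Prod.mk.injEq] at hl ⊢
      obtain ⟨h1, ⟨h2, h3⟩, rfl⟩ := hl
      by_cases hq : q = j
      · exact Or.inr ⟨p, ⟨by omega, h1.2⟩, ⟨rfl, hq.symm⟩, rfl⟩
      · exact Or.inl (Or.inr ⟨h1, ⟨h2, fun hqT => h3 ⟨hq, hqT⟩⟩, rfl⟩)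
    | succ k ih =>
      intro hk
      obtain ⟨G₁, h1, h2, h3, h4⟩ := ih (by omega)
      refine (exists_resolve (x := (k + 1, j))
        (K := insert ((i + 1, j), false) (outsideClause n i T) ∪
          (Finset.Ioc (k + 1) i).image (fun p => ((p, j), true)))
        (W := Finset.Icc 1 i ×ˢ T.erase j ∪ Finset.Icc 1 (k + 1) ×ˢ {j}) h2
        (by simp) (h4.mono subset_rfl ?_ ?_)
        ((hax _ (holeClause_mem (n := n) (j := j) (p := k + 1) (q := i + 1)
          (by omega) (by omega) (by omega) hjn.1 hjn.2)).mono h1 ?_ (Finset.empty_subset _))).elim ?_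
      · rintro ⟨⟨p, q⟩, c⟩ hl
        simp only [Finset.mem_union, Finset.mem_insert, Finset.mem_image, Finset.mem_Ioc,
          Prod.mk.injEq] at hl ⊢
        rcases hl with hl | ⟨p', hp', ⟨rfl, rfl⟩, rfl⟩
        · exact Or.inr (Or.inl hl)
        · by_cases hpk : p' = k + 1
          · exact Or.inl ⟨⟨hpk, rfl⟩, rfl⟩
          · exact Or.inr (Or.inr ⟨p', ⟨by omega, hp'.2⟩, ⟨rfl, rfl⟩, rfl⟩)
      · rintro ⟨p, q⟩ hl
        simp only [Finset.mem_union, Finset.mem_erase, Finset.mem_product, Finset.mem_Icc,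
          Finset.mem_singleton, Prod.mk.injEq, ne_eq] at hl ⊢
        rcases hl with ⟨h, hq, hqT⟩ | ⟨h, hq⟩
        · exact ⟨fun h' => hq h'.2, Or.inl ⟨h, hq, hqT⟩⟩
        · exact ⟨fun h' => by omega, Or.inr ⟨by omega, hq⟩⟩
      · rintro l hl
        simp only [holeClause, Finset.mem_insert, Finset.mem_singleton] at hl
        rcases hl with rfl | rfl <;> simp
      · rintro G' ⟨h5, h6, h7, h8⟩
        exact ⟨G', h1.trans h5, h6, by omega, h8⟩
  obtain ⟨G', h1, h2, h3, h4⟩ := key i le_rfl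
  refine ⟨G', h1, h2, by omega, h4.mono subset_rfl ?_ ?_⟩
  · simp
  · rintro ⟨p, q⟩ hl
    simp only [Finset.mem_union, Finset.mem_erase, Finset.mem_product, Finset.mem_Icc,
      Finset.mem_singleton] at hl ⊢
    rcases hl with ⟨h, hq, hqT⟩ | ⟨h, rfl⟩
    · exact ⟨h, hqT⟩
    · exact ⟨h, hj⟩

/-- With `i = |T|`: the clause "one of the pigeons `1, ..., i + 1` is outside `T`" follows from the
clauses "one of the pigeons `1, ..., i` is outside `T \ {j}`", `j ∈ T`, within `n * n + n` steps. -/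
theorem exists_outsideClause {n i : ℕ} {T : Finset ℕ} (hT : T ⊆ Finset.Icc 1 n) (hi : T.card = i)
    {G : Finset (Clause (ℕ × ℕ) × Finset (ℕ × ℕ))}
    (hG : RegClosed (WPHPneg (n + 1) n) G)
    (hax : ∀ C ∈ WPHPneg (n + 1) n, Derived G C ∅)
    (hd : ∀ j ∈ T, Derived G (outsideClause n i (T.erase j)) (Finset.Icc 1 i ×ˢ T.erase j)) :
    ∃ G', G ⊆ G' ∧ RegClosed (WPHPneg (n + 1) n) G' ∧ G'.card ≤ G.card + (n * n + n) ∧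
      Derived G' (outsideClause n (i + 1) T) (Finset.Icc 1 (i + 1) ×ˢ T) := by
  have hin : i ≤ n := by
    have := Finset.card_le_card hT
    rw [Nat.card_Icc] at this
    omega
  obtain ⟨G₁, hGG₁, hG₁, hc₁, hd₁⟩ := exists_family hG
    (fun j => insert ((i + 1, j), false) (outsideClause n i T)) (fun _ => Finset.Icc 1 i ×ˢ T) n T
    (fun j hj G₁ h1 h2 => exists_negHole hT hin hj h2
      (fun C hC => (hax C hC).mono h1 subset_rfl subset_rfl)
      ((hd j hj).mono h1 subset_rfl subset_rfl))
  -- `U` is the set of holes already eliminated from the pigeon clause of `i + 1`.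
  have key : ∀ U : Finset ℕ, U ⊆ T → ∃ G', G₁ ⊆ G' ∧ RegClosed (WPHPneg (n + 1) n) G' ∧
      G'.card ≤ G₁.card + U.card ∧
      Derived G' (outsideClause n i T ∪ (Finset.Icc 1 n \ U).image (fun q => ((i + 1, q), true)))
        (Finset.Icc 1 i ×ˢ T ∪ {i + 1} ×ˢ U) := by
    intro U
    induction U using Finset.induction_on with
    | empty =>
      intro _
      refine ⟨G₁, subset_rfl, hG₁, le_rfl, (hax _ (pigeonClause_mem (n := n) (i := i + 1)
        (by omega) (by omega))).mono hGG₁ ?_ (Finset.empty_subset _)⟩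
      simp [pigeonClause]
    | insert j U hjU ih =>
      intro hUT
      obtain ⟨hjT, hUT⟩ := Finset.insert_subset_iff.1 hUT
      obtain ⟨G₂, h1, h2, h3, h4⟩ := ih hUT
      refine (exists_resolve (x := (i + 1, j))
        (K := outsideClause n i T ∪
          (Finset.Icc 1 n \ insert j U).image (fun q => ((i + 1, q), true)))
        (W := Finset.Icc 1 i ×ˢ T ∪ {i + 1} ×ˢ insert j U) h2
        (by simp) (h4.mono subset_rfl ?_ ?_) ((hd₁ j hjT).mono h1 ?_ ?_)).elim ?_
      · rintro ⟨⟨p, q⟩, c⟩ hl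
        simp only [Finset.mem_union, Finset.mem_insert, Finset.mem_image, Finset.mem_sdiff,
          Prod.mk.injEq] at hl ⊢
        rcases hl with hl | ⟨q', ⟨hq, hqU⟩, ⟨rfl, rfl⟩, rfl⟩
        · exact Or.inr (Or.inl hl)
        · by_cases hqj : q' = j
          · exact Or.inl ⟨⟨rfl, hqj⟩, rfl⟩
          · exact Or.inr (Or.inr ⟨q', ⟨hq, by simp [hqj, hqU]⟩, ⟨rfl, rfl⟩, rfl⟩)
      · rintro ⟨p, q⟩ hl
        simp only [Finset.mem_union, Finset.mem_erase, Finset.mem_product, Finset.mem_Icc,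
          Finset.mem_singleton, Finset.mem_insert, Prod.mk.injEq, ne_eq] at hl ⊢
        rcases hl with ⟨h, hqT⟩ | ⟨h, hq⟩
        · exact ⟨fun h' => by omega, Or.inl ⟨h, hqT⟩⟩
        · exact ⟨fun h' => hjU (h'.2 ▸ hq), Or.inr ⟨h, Or.inr hq⟩⟩
      · exact Finset.insert_subset_insert _ Finset.subset_union_left
      · rintro ⟨p, q⟩ hl
        simp only [Finset.mem_union, Finset.mem_erase, Finset.mem_product, Finset.mem_Icc,
          Prod.mk.injEq, ne_eq] at hl ⊢
        exact ⟨fun h' => by omega, Or.inl hl⟩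
      · rintro G' ⟨h5, h6, h7, h8⟩
        refine ⟨G', h1.trans h5, h6, ?_, h8⟩
        rw [Finset.card_insert_of_notMem hjU]
        omega
  obtain ⟨G', h1, h2, h3, h4⟩ := key T subset_rfl
  refine ⟨G', hGG₁.trans h1, h2, ?_, h4.mono subset_rfl ?_ ?_⟩
  · rw [hi] at hc₁ h3
    have := Nat.mul_le_mul_right n hin
    omega
  · rintro ⟨⟨p, q⟩, c⟩ hl
    simp only [Finset.mem_union, Finset.mem_image, Finset.mem_sdiff, Finset.mem_Icc,
      mem_outsideClause, Prod.mk.injEq] at hl ⊢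
    rcases hl with ⟨h, h', h''⟩ | ⟨q', hq, ⟨rfl, rfl⟩, rfl⟩
    · exact ⟨by omega, h', h''⟩
    · exact ⟨by omega, hq, rfl⟩
  · rintro ⟨p, q⟩ hl
    simp only [Finset.mem_union, Finset.mem_product, Finset.mem_Icc, Finset.mem_singleton] at hl ⊢
    rcases hl with ⟨h, hqT⟩ | ⟨h, hq⟩
    · exact ⟨by omega, hqT⟩
    · exact ⟨by omega, hq⟩

theorem card_WPHPneg_le (n : ℕ) :
    (WPHPneg (n + 1) n).card ≤ (n + 1) + (n + 1) * ((n + 1) * n) := by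
  refine (Finset.card_union_le _ _).trans (Nat.add_le_add ?_ ?_)
  · refine Finset.card_image_le.trans ?_
    simp
  · refine Finset.card_image_le.trans ((Finset.card_filter_le _ _).trans ?_)
    simp [Finset.card_product]

/-- All clauses `outsideClause n (|T| + 1) T` with `|T| < t` are derived level by level, a level
being the sets `T` of a given size; each level is charged the crude bound of `2 ^ n` sets. -/
theorem exists_levels (n t : ℕ) :
    ∃ G, RegClosed (WPHPneg (n + 1) n) G ∧ (∀ C ∈ WPHPneg (n + 1) n, Derived G C ∅) ∧
      G.card ≤ (WPHPneg (n + 1) n).card + t * (2 ^ n * (n * n + n)) ∧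
      ∀ T ⊆ Finset.Icc 1 n, T.card < t →
        Derived G (outsideClause n (T.card + 1) T) (Finset.Icc 1 (T.card + 1) ×ˢ T) := by
  induction t with
  | zero =>
    refine ⟨(WPHPneg (n + 1) n).image fun C => (C, ∅), ?_, ?_, ?_, by simp⟩
    · intro u hu
      obtain ⟨C, hC, rfl⟩ := Finset.mem_image.1 hu
      exact Or.inl hC
    · intro C hC
      exact ⟨(C, ∅), Finset.mem_image_of_mem _ hC, subset_rfl, subset_rfl⟩
    · exact Finset.card_image_le.trans (by omega)
  | succ t ih =>
    obtain ⟨G, hG, hax, hc, hd⟩ := ih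
    obtain ⟨G', h1, h2, h3, h4⟩ := exists_family hG
      (fun T : Finset ℕ => outsideClause n (T.card + 1) T)
      (fun T => Finset.Icc 1 (T.card + 1) ×ˢ T) (n * n + n)
      ((Finset.Icc 1 n).powerset.filter fun T => T.card = t) (by
        intro T hT G₁ hGG₁ hG₁
        obtain ⟨hT, hTt⟩ := Finset.mem_filter.1 hT
        rw [Finset.mem_powerset] at hT
        refine exists_outsideClause hT rfl hG₁
          (fun C hC => (hax C hC).mono hGG₁ subset_rfl subset_rfl) fun j hj => ?_
        have hcard : (T.erase j).card + 1 = T.card := Finset.card_erase_add_one hj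
        have := hd (T.erase j) ((Finset.erase_subset _ _).trans hT) (by omega)
        rw [hcard] at this
        exact this.mono hGG₁ subset_rfl subset_rfl)
    refine ⟨G', h2, fun C hC => (hax C hC).mono h1 subset_rfl subset_rfl, ?_, ?_⟩
    · have hcard : ((Finset.Icc 1 n).powerset.filter fun T => T.card = t).card ≤ 2 ^ n := by
        refine (Finset.card_filter_le _ _).trans ?_
        simp [Finset.card_powerset]
      have := Nat.mul_le_mul_right (n * n + n) hcard
      rw [Nat.succ_mul]
      omega
    · intro T hT hTt
      by_cases h : T.card = t
      · exact h4 T (Finset.mem_filter.2 ⟨Finset.mem_powerset.2 hT, h⟩)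
      · exact (hd T hT (by omega)).mono h1 subset_rfl subset_rfl

/-- there are constants `c > 0` and `k` such that for every `n ≥ 1`
the formula `¬PHP_n = ¬WPHP^{n+1}_n` has a Regular Resolution refutation of
length at most `c · 2^n · n^k`. -/
theorem php_trivial_upper_bound :
    ∃ c k : ℕ, 0 < c ∧ ∀ n : ℕ, 1 ≤ n →
      ∃ P : ResolutionProof (WPHPneg (n + 1) n),
        P.Regular ∧ P.size ≤ c * 2 ^ n * n ^ k := by
  refine ⟨10, 3, by norm_num, fun n hn => ?_⟩
  obtain ⟨G, hG, -, hc, hd⟩ := exists_levels n (n + 1)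
  obtain ⟨⟨C, W⟩, hu, hC, -⟩ := hd (Finset.Icc 1 n) subset_rfl (by simp)
  have hC0 : C = ∅ := by
    simpa [outsideClause] using hC
  subst hC0
  obtain ⟨P, hP, hs⟩ := exists_regular_of_regClosed hG hu
  refine ⟨P, hP, hs.trans (hc.trans ?_)⟩
  have h1 := card_WPHPneg_le n
  have h2 : (n + 1) + (n + 1) * ((n + 1) * n) ≤ 6 * n ^ 3 := by
    obtain ⟨k, rfl⟩ := Nat.exists_eq_add_of_le hn
    ring_nf
    nlinarith [Nat.zero_le k, Nat.zero_le (k ^ 2), Nat.zero_le (k ^ 3)]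
  have h3 : (n + 1) * (n * n + n) ≤ 4 * n ^ 3 := by
    obtain ⟨k, rfl⟩ := Nat.exists_eq_add_of_le hn
    ring_nf
    nlinarith [Nat.zero_le k, Nat.zero_le (k ^ 2), Nat.zero_le (k ^ 3)]
  have h4 : 1 ≤ 2 ^ n := Nat.one_le_two_pow
  calc (WPHPneg (n + 1) n).card + (n + 1) * (2 ^ n * (n * n + n))
      = (WPHPneg (n + 1) n).card + 2 ^ n * ((n + 1) * (n * n + n)) := by ring
    _ ≤ 2 ^ n * (6 * n ^ 3) + 2 ^ n * (4 * n ^ 3) :=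
        Nat.add_le_add ((h1.trans h2).trans (Nat.le_mul_of_pos_left _ h4))
          (Nat.mul_le_mul_left _ h3)
    _ = 10 * 2 ^ n * n ^ 3 := by ring
end

section
/- (Buss–Pitassi) There exist constants c > 1 and k ∈ ℕ such that for every n ≥ 1 and every m with m > c^{√(n·log n)}, the CNF formula ¬WPHP^m_n has a Regular Resolution refutation of length at most m^k. -/
/-! ### From ordered derivations with weakening to regular refutations -/

/-- `ClosedNodes f rk ρ G S`: the finite set `S` of nodes, node `s` carrying the clause `G s`, is an
ordered Resolution derivation from `f` in which weakening is allowed at every step. Every node is a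
weakening of a clause of `f`, or of another node, or of a resolvent of two nodes. The level `ρ s`
bounds from below the rank `rk x` of all variables resolved upon at or beneath `s`. -/
def ClosedNodes {V α : Type} [DecidableEq V] (f : Finset (Clause V)) (rk : V → ℕ)
    (ρ : α → ℕ) (G : α → Clause V) (S : Finset α) : Prop :=
  ∀ s ∈ S, (∃ C ∈ f, C ⊆ G s) ∨ (∃ v ∈ S, ρ s < ρ v ∧ G v ⊆ G s) ∨
    (∃ x, ρ s ≤ rk x ∧ ∃ a ∈ S, ∃ b ∈ S, rk x < ρ a ∧ rk x < ρ b ∧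
      G a ⊆ insert (x, true) (G s) ∧ G b ⊆ insert (x, false) (G s))

/-- `OrderedSeq f rk N cl st`: the clauses `cl 0, ..., cl (N - 1)` with justifications `st` form a
Resolution derivation from `f` (without weakening) in which the rank of the resolved variable
strictly increases from each node to its children. -/
def OrderedSeq {V : Type} [DecidableEq V] (f : Finset (Clause V)) (rk : V → ℕ)
    (N : ℕ) (cl : ℕ → Clause V) (st : ℕ → Option (V × ℕ × ℕ)) : Prop :=
  ∀ u < N, (st u = none → cl u ∈ f) ∧
    ∀ x a b, st u = some (x, a, b) → a < u ∧ b < u ∧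
      (x, true) ∈ cl a ∧ (x, false) ∈ cl b ∧
      cl u = (cl a).erase (x, true) ∪ (cl b).erase (x, false) ∧
      (∀ y c d, st a = some (y, c, d) → rk x < rk y) ∧
      (∀ y c d, st b = some (y, c, d) → rk x < rk y)

lemma OrderedSeq.snoc {V : Type} [DecidableEq V] {f : Finset (Clause V)} {rk : V → ℕ}
    {N : ℕ} {cl : ℕ → Clause V} {st : ℕ → Option (V × ℕ × ℕ)} (h : OrderedSeq f rk N cl st)
    (C : Clause V) (o : Option (V × ℕ × ℕ)) (h0 : o = none → C ∈ f)
    (h1 : ∀ x a b, o = some (x, a, b) → a < N ∧ b < N ∧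
      (x, true) ∈ cl a ∧ (x, false) ∈ cl b ∧
      C = (cl a).erase (x, true) ∪ (cl b).erase (x, false) ∧
      (∀ y c d, st a = some (y, c, d) → rk x < rk y) ∧
      (∀ y c d, st b = some (y, c, d) → rk x < rk y)) :
    OrderedSeq f rk (N + 1) (Function.update cl N C) (Function.update st N o) := by
  intro u hu
  rcases Nat.lt_succ_iff_lt_or_eq.mp hu with hu | rfl
  · have hne : u ≠ N := hu.ne
    simp only [Function.update_of_ne hne]
    refine ⟨(h u hu).1, fun x a b hs => ?_⟩
    obtain ⟨ha, hb, hh⟩ := (h u hu).2 x a b hs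
    have ha' : a ≠ N := by omega
    have hb' : b ≠ N := by omega
    simp only [Function.update_of_ne ha', Function.update_of_ne hb']
    exact ⟨ha, hb, hh⟩
  · simp only [Function.update_self]
    refine ⟨h0, fun x a b hs => ?_⟩
    obtain ⟨ha, hb, hh⟩ := h1 x a b hs
    simp only [Function.update_of_ne ha.ne, Function.update_of_ne hb.ne]
    exact ⟨ha, hb, hh⟩

/-- Elimination of weakening. The nodes are treated in order of decreasing level, and each is
matched with a derived subclause of its clause; when a resolved literal is absent from the
subclause of a child, that subclause is used again and no new clause is needed. -/
lemma exists_orderedSeq {V α : Type} [DecidableEq V] [DecidableEq α] (f : Finset (Clause V))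
    (rk : V → ℕ) (ρ : α → ℕ) (G : α → Clause V) (S : Finset α) :
    ClosedNodes f rk ρ G S → ∃ N cl st, OrderedSeq f rk N cl st ∧ N ≤ S.card ∧
      ∀ s ∈ S, ∃ u < N, cl u ⊆ G s ∧ ∀ x a b, st u = some (x, a, b) → ρ s ≤ rk x := by
  induction S using Finset.induction_on_min_value ρ with
  | empty =>
    intro _
    exact ⟨0, fun _ => ∅, fun _ => none, fun u hu => absurd hu (by omega), by simp, by simp⟩
  | insert s S hs hmin ih =>
    intro hS
    have hclosed : ClosedNodes f rk ρ G S := by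
      intro v hv
      have hle := hmin v hv
      rcases hS v (Finset.mem_insert_of_mem hv) with h | ⟨w, hw, hlt, hG⟩ |
        ⟨x, hx, a, ha, b, hb, hxa, hxb, hGa, hGb⟩
      · exact Or.inl h
      · refine Or.inr (Or.inl ⟨w, ?_, hlt, hG⟩)
        rcases Finset.mem_insert.mp hw with rfl | h
        · omega
        · exact h
      · refine Or.inr (Or.inr ⟨x, hx, a, ?_, b, ?_, hxa, hxb, hGa, hGb⟩)
        · rcases Finset.mem_insert.mp ha with rfl | h
          · omega
          · exact h
        · rcases Finset.mem_insert.mp hb with rfl | h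
          · omega
          · exact h
    obtain ⟨N, cl, st, hO, hN, hcov⟩ := ih hclosed
    -- Either an existing clause serves for `s`, or one new clause is appended.
    have old : (∃ u < N, cl u ⊆ G s ∧ ∀ x a b, st u = some (x, a, b) → ρ s ≤ rk x) →
        ∃ N cl st, OrderedSeq f rk N cl st ∧ N ≤ (insert s S).card ∧
          ∀ v ∈ insert s S, ∃ u < N, cl u ⊆ G v ∧
            ∀ x a b, st u = some (x, a, b) → ρ v ≤ rk x := by
      intro hu
      refine ⟨N, cl, st, hO, ?_, ?_⟩
      · rw [Finset.card_insert_of_notMem hs]; omega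
      · intro v hv
        rcases Finset.mem_insert.mp hv with rfl | hv
        · exact hu
        · exact hcov v hv
    have new : ∀ (C : Clause V) (o : Option (V × ℕ × ℕ)),
        OrderedSeq f rk (N + 1) (Function.update cl N C) (Function.update st N o) →
        C ⊆ G s → (∀ x a b, o = some (x, a, b) → ρ s ≤ rk x) →
        ∃ N cl st, OrderedSeq f rk N cl st ∧ N ≤ (insert s S).card ∧
          ∀ v ∈ insert s S, ∃ u < N, cl u ⊆ G v ∧
            ∀ x a b, st u = some (x, a, b) → ρ v ≤ rk x := by
      intro C o hO' hC ho
      refine ⟨N + 1, _, _, hO', ?_, ?_⟩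
      · rw [Finset.card_insert_of_notMem hs]; omega
      · intro v hv
        rcases Finset.mem_insert.mp hv with rfl | hv
        · exact ⟨N, by omega, by simpa using hC, by simpa using ho⟩
        · obtain ⟨u, hu, h1, h2⟩ := hcov v hv
          refine ⟨u, by omega, ?_, ?_⟩
          · simpa only [Function.update_of_ne hu.ne] using h1
          · simpa only [Function.update_of_ne hu.ne] using h2
    have ne_of_lt : ∀ w ∈ insert s S, ρ s < ρ w → w ∈ S := by
      intro w hw hlt
      rcases Finset.mem_insert.mp hw with rfl | h
      · omega
      · exact h
    rcases hS s (Finset.mem_insert_self _ _) with ⟨C, hC, hCs⟩ | ⟨w, hw, hlt, hG⟩ |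
        ⟨x, hx, a, ha, b, hb, hxa, hxb, hGa, hGb⟩
    · exact new C none (hO.snoc C none (fun _ => hC) (by simp)) hCs (by simp)
    · obtain ⟨u, hu, h1, h2⟩ := hcov w (ne_of_lt w hw hlt)
      exact old ⟨u, hu, h1.trans hG, fun x a b h => hlt.le.trans (h2 x a b h)⟩
    · obtain ⟨u, hu, hu1, hu2⟩ := hcov a (ne_of_lt a ha (by omega))
      obtain ⟨v, hv, hv1, hv2⟩ := hcov b (ne_of_lt b hb (by omega))
      by_cases hxu : (x, true) ∈ cl u
      · by_cases hxv : (x, false) ∈ cl v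
        · refine new ((cl u).erase (x, true) ∪ (cl v).erase (x, false)) (some (x, u, v))
            (hO.snoc _ _ (by simp) ?_) ?_ ?_
          · rintro y c d h
            simp only [Option.some.injEq, Prod.mk.injEq] at h
            obtain ⟨rfl, rfl, rfl⟩ := h
            exact ⟨hu, hv, hxu, hxv, rfl, fun y c d h => hxa.trans_le (hu2 y c d h),
              fun y c d h => hxb.trans_le (hv2 y c d h)⟩
          · intro l hl
            rcases Finset.mem_union.mp hl with hl | hl
            · have := Finset.mem_erase.mp hl
              exact Finset.mem_of_mem_insert_of_ne (hGa (hu1 this.2)) this.1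
            · have := Finset.mem_erase.mp hl
              exact Finset.mem_of_mem_insert_of_ne (hGb (hv1 this.2)) this.1
          · rintro y c d h
            simp only [Option.some.injEq, Prod.mk.injEq] at h
            rw [← h.1]; exact hx
        · refine old ⟨v, hv, fun l hl => ?_, fun y c d h => ?_⟩
          · exact Finset.mem_of_mem_insert_of_ne (hGb (hv1 hl)) (by rintro rfl; exact hxv hl)
          · have := hv2 y c d h; omega
      · refine old ⟨u, hu, fun l hl => ?_, fun y c d h => ?_⟩
        · exact Finset.mem_of_mem_insert_of_ne (hGa (hu1 hl)) (by rintro rfl; exact hxu hl)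
        · have := hu2 y c d h; omega

/-- A refutation in which the rank of the resolved variable increases along every edge is
regular. -/
lemma regular_of_rank {V : Type} [DecidableEq V] {f : Finset (Clause V)}
    (P : ResolutionProof f) (rk : V → ℕ)
    (h : ∀ u x a b, P.step u = some (x, a, b) →
      (∀ y c d, P.step a = some (y, c, d) → rk x < rk y) ∧
      (∀ y c d, P.step b = some (y, c, d) → rk x < rk y)) : P.Regular := by
  intro u w p hp
  suffices H : (p.map fun s => P.label s.1).Nodup ∧
      ∀ s ∈ p, (∃ z, P.label u = some z) ∧ ∀ y, P.label s.1 = some y →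
        ∀ x, P.label u = some x → rk x ≤ rk y from H.1
  induction hp with
  | nil u => simp
  | @cons u v w x a b bl rest hstep hv hrest ih =>
    have hlab : P.label u = some x := by simp [ResolutionProof.label, hstep]
    have key : ∀ s ∈ rest, ∀ y, P.label s.1 = some y → rk x < rk y := by
      intro s hs y hy
      obtain ⟨⟨z, hz⟩, hle⟩ := ih.2 s hs
      refine lt_of_lt_of_le ?_ (hle y hy z hz)
      simp only [ResolutionProof.label, Option.map_eq_some_iff] at hz
      obtain ⟨⟨z', c, d⟩, hz, rfl⟩ := hz
      subst hv
      cases bl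
      · exact (h u x a b hstep).1 _ c d hz
      · exact (h u x a b hstep).2 _ c d hz
    refine ⟨?_, ?_⟩
    · rw [List.map_cons, List.nodup_cons]
      refine ⟨?_, ih.1⟩
      rw [List.mem_map]
      rintro ⟨s, hs, he⟩
      exact lt_irrefl _ (key s hs x (he.trans hlab))
    · intro s hs
      refine ⟨⟨x, hlab⟩, fun y hy x' hx' => ?_⟩
      rw [hlab, Option.some.injEq] at hx'
      subst hx'
      rcases List.mem_cons.mp hs with rfl | hs
      · simp only [hlab, Option.some.injEq] at hy
        rw [hy]
      · exact (key s hs y hy).le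

lemma exists_regular {V α : Type} [DecidableEq V] [DecidableEq α] (f : Finset (Clause V))
    (rk : V → ℕ) (ρ : α → ℕ) (G : α → Clause V) (S : Finset α) (hS : ClosedNodes f rk ρ G S)
    (s : α) (hs : s ∈ S) (hempty : G s = ∅) :
    ∃ P : ResolutionProof f, P.Regular ∧ P.size ≤ S.card := by
  obtain ⟨N, cl, st, hO, hN, hcov⟩ := exists_orderedSeq f rk ρ G S hS
  obtain ⟨w, hw, hcl, -⟩ := hcov s hs
  rw [hempty, Finset.subset_empty] at hcl
  -- The sequence is cut off at the empty clause; `Fin.ofNat` is exact on the indices that occur.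
  have key : ∀ (u : Fin (w + 1)) (x : V) (a b : Fin (w + 1)),
      (st u).map (fun q => (q.1, Fin.ofNat (w + 1) q.2.1, Fin.ofNat (w + 1) q.2.2))
        = some (x, a, b) → st u = some (x, (a : ℕ), (b : ℕ)) := by
    intro u x a b h
    rw [Option.map_eq_some_iff] at h
    obtain ⟨⟨y, c, d⟩, hst, he⟩ := h
    obtain ⟨hc, hd, -⟩ := (hO u (by omega)).2 y c d hst
    simp only [Prod.mk.injEq] at he
    obtain ⟨rfl, rfl, rfl⟩ := he
    have h1 : c % (w + 1) = c := Nat.mod_eq_of_lt (by omega)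
    have h2 : d % (w + 1) = d := Nat.mod_eq_of_lt (by omega)
    simp [Fin.ofNat, h1, h2, hst]
  refine ⟨{ size := w + 1
            size_pos := by omega
            clause := fun u => cl u
            step := fun u => (st u).map
              (fun q => (q.1, Fin.ofNat (w + 1) q.2.1, Fin.ofNat (w + 1) q.2.2))
            step_axiom := fun u h => (hO u (by omega)).1 (by simpa using h)
            step_lt := fun u x a b h => ?_
            step_res := fun u x a b h => ?_
            last_empty := by simpa using hcl }, ?_, ?_⟩
  · obtain ⟨h1, h2, -⟩ := (hO u (by omega)).2 x a b (key u x a b h)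
    exact ⟨h1, h2⟩
  · obtain ⟨-, -, h1, h2, h3, -⟩ := (hO u (by omega)).2 x a b (key u x a b h)
    exact ⟨h1, h2, h3⟩
  · refine regular_of_rank _ rk (fun u x a b h => ?_)
    obtain ⟨-, -, -, -, -, h1, h2⟩ := (hO u (by have := u.2; simp only at this; omega)).2 x a b
      (key u x a b h)
    exact ⟨fun y c d h' => h1 y c d (key a y c d h'), fun y c d h' => h2 y c d (key b y c d h')⟩
  · show w + 1 ≤ _
    omega

/-! ### The deletion game on a family of pigeon sets -/

/-- `Good 𝓢 k I`: starting from `I`, one can survive `k` rounds of the game in which an adversary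
picks an element of the current set, which must then be replaced by a nonempty subset from the
family `𝓢` avoiding that element. -/
def Good (𝓢 : Finset (Finset ℕ)) : ℕ → Finset ℕ → Prop
  | 0, I => I.Nonempty
  | k + 1, I => I.Nonempty ∧ ∀ i ∈ I, ∃ I' ∈ 𝓢, I' ⊆ I.erase i ∧ Good 𝓢 k I'

lemma Good.nonempty {𝓢 : Finset (Finset ℕ)} {k : ℕ} {I : Finset ℕ} (h : Good 𝓢 k I) :
    I.Nonempty := by
  cases k with
  | zero => exact h
  | succ k => exact h.1

lemma Good.mono {𝓢 𝓣 : Finset (Finset ℕ)} (h𝓢 : 𝓢 ⊆ 𝓣) {k : ℕ} :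
    ∀ {I : Finset ℕ}, Good 𝓢 k I → Good 𝓣 k I := by
  induction k with
  | zero => intro I h; exact h
  | succ k ih =>
    intro I h
    refine ⟨h.1, fun i hi => ?_⟩
    obtain ⟨I', h1, h2, h3⟩ := h.2 i hi
    exact ⟨I', h𝓢 h1, h2, ih h3⟩

lemma Good.of_succ {𝓢 : Finset (Finset ℕ)} {k : ℕ} :
    ∀ {I : Finset ℕ}, Good 𝓢 (k + 1) I → Good 𝓢 k I := by
  induction k with
  | zero => intro I h; exact h.1
  | succ k ih =>
    intro I h
    refine ⟨h.1, fun i hi => ?_⟩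
    obtain ⟨I', h1, h2, h3⟩ := h.2 i hi
    exact ⟨I', h1, h2, ih h3⟩

lemma Good.of_le {𝓢 : Finset (Finset ℕ)} {k l : ℕ} (hkl : k ≤ l) {I : Finset ℕ}
    (h : Good 𝓢 l I) : Good 𝓢 k I := by
  induction hkl with
  | refl => exact h
  | step _ ih => exact ih h.of_succ

/-- The `c`-th interval of length `q`: the set of `i` with `i / q = c`. -/
def blk (q c : ℕ) : Finset ℕ := Finset.Ico (c * q) ((c + 1) * q)

lemma mem_blk {q c i : ℕ} (hq : 0 < q) : i ∈ blk q c ↔ i / q = c := by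
  rw [blk, Finset.mem_Ico, Nat.div_eq_iff hq]
  have : (c + 1) * q = c * q + q := by ring
  omega

/-- Unions of disjoint sets, each of which survives `k` rounds, survive one further round for each
additional part. -/
lemma good_biUnion {𝓢 : Finset (Finset ℕ)} {k : ℕ} (U : ℕ → Finset ℕ) (B : ℕ)
    (hU : ∀ b < B, Good 𝓢 k (U b))
    (hdisj : ∀ i b b', i ∈ U b → i ∈ U b' → b = b')
    (hmem : ∀ T ⊆ Finset.range B, T.biUnion U ∈ 𝓢) (r : ℕ) :
    ∀ T ⊆ Finset.range B, T.card = r + 1 → Good 𝓢 (k + r) (T.biUnion U) := by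
  induction r with
  | zero =>
    intro T hT hcard
    obtain ⟨b, rfl⟩ := Finset.card_eq_one.mp hcard
    simpa using hU b (by simpa using hT)
  | succ r ih =>
    intro T hT hcard
    refine ⟨?_, ?_⟩
    · obtain ⟨b, hb⟩ := Finset.card_pos.mp (by omega : 0 < T.card)
      obtain ⟨i, hi⟩ := (hU b (Finset.mem_range.mp (hT hb))).nonempty
      exact ⟨i, Finset.mem_biUnion.mpr ⟨b, hb, hi⟩⟩
    · intro i hi
      obtain ⟨b, hb, hib⟩ := Finset.mem_biUnion.mp hi
      have hsub : T.erase b ⊆ Finset.range B := (Finset.erase_subset _ _).trans hT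
      refine ⟨(T.erase b).biUnion U, hmem _ hsub, ?_,
        ih _ hsub (by rw [Finset.card_erase_of_mem hb]; omega)⟩
      intro j hj
      obtain ⟨b', hb', hjb⟩ := Finset.mem_biUnion.mp hj
      rw [Finset.mem_erase] at hb' ⊢
      refine ⟨?_, Finset.mem_biUnion.mpr ⟨b', hb'.2, hjb⟩⟩
      rintro rfl
      exact hb'.1 (hdisj j b' b hjb hib)

/-- The tree of blocks: unions of sibling blocks at all levels of a `B`-ary tree of depth `D`
survive `D (B - 1)` rounds. Here `B = b + 1`, and `a` is the index of the root block. -/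
lemma exists_good (b D : ℕ) : ∀ a : ℕ, ∃ 𝓢 : Finset (Finset ℕ),
    𝓢.card ≤ (2 * (b + 1)) ^ D * 2 ^ (b + 1) ∧ blk ((b + 1) ^ D) a ∈ 𝓢 ∧
    Good 𝓢 (D * b) (blk ((b + 1) ^ D) a) := by
  induction D with
  | zero =>
    intro a
    refine ⟨{blk 1 a}, ?_, by simp, ?_⟩
    · simpa using Nat.one_le_two_pow
    · have : a ∈ blk 1 a := by simp [blk]
      simpa [Good] using ⟨a, this⟩
  | succ D ih =>
    intro a
    choose F hcard hmem hgood using ih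
    set q := (b + 1) ^ D with hq
    have hq0 : 0 < q := by positivity
    set U : ℕ → Finset ℕ := fun c => blk q (a * (b + 1) + c) with hU
    set 𝓢 : Finset (Finset ℕ) :=
      (Finset.range (b + 1)).powerset.image (fun T => T.biUnion U) ∪
        (Finset.range (b + 1)).biUnion (fun c => F (a * (b + 1) + c)) with h𝓢
    have hall : (Finset.range (b + 1)).biUnion U = blk ((b + 1) ^ (D + 1)) a := by
      ext i
      rw [mem_blk (by positivity), Finset.mem_biUnion, pow_succ, ← hq, ← Nat.div_div_eq_div_mul,
        Nat.div_eq_iff (by omega)]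
      simp only [hU, mem_blk hq0, Finset.mem_range]
      constructor
      · rintro ⟨c, hc, h⟩; omega
      · intro h; exact ⟨i / q - a * (b + 1), by omega, by omega⟩
    have hmemU : ∀ T ⊆ Finset.range (b + 1), T.biUnion U ∈ 𝓢 := fun T hT =>
      Finset.mem_union_left _ (Finset.mem_image.mpr ⟨T, Finset.mem_powerset.mpr hT, rfl⟩)
    refine ⟨𝓢, ?_, ?_, ?_⟩
    · have h1 : ((Finset.range (b + 1)).powerset.image (fun T => T.biUnion U)).card
          ≤ 2 ^ (b + 1) := by
        refine Finset.card_image_le.trans ?_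
        rw [Finset.card_powerset, Finset.card_range]
      have h2 : ((Finset.range (b + 1)).biUnion (fun c => F (a * (b + 1) + c))).card
          ≤ (b + 1) * ((2 * (b + 1)) ^ D * 2 ^ (b + 1)) := by
        refine (Finset.card_biUnion_le_card_mul _ _ _ (fun c _ => hcard _)).trans ?_
        rw [Finset.card_range]
      have h3 : 1 ≤ (b + 1) * (2 * (b + 1)) ^ D := Nat.succ_le_of_lt (by positivity)
      have h4 := Nat.mul_le_mul_right (2 ^ (b + 1)) h3
      calc 𝓢.card ≤ _ := Finset.card_union_le _ _
        _ ≤ 2 ^ (b + 1) + (b + 1) * ((2 * (b + 1)) ^ D * 2 ^ (b + 1)) := add_le_add h1 h2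
        _ ≤ (b + 1) * (2 * (b + 1)) ^ D * 2 ^ (b + 1)
            + (b + 1) * ((2 * (b + 1)) ^ D * 2 ^ (b + 1)) := by omega
        _ = _ := by ring
    · rw [← hall]; exact hmemU _ subset_rfl
    · rw [← hall, add_mul, one_mul]
      refine good_biUnion U (b + 1) ?_ ?_ hmemU b _ subset_rfl (by simp)
      · intro c hc
        refine (hgood (a * (b + 1) + c)).mono ?_
        intro I hI
        exact Finset.mem_union_right _ (Finset.mem_biUnion.mpr ⟨c, by simpa using hc, hI⟩)
      · intro i c c' h h'
        simp only [hU, mem_blk hq0] at h h'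
        omega

/-! ### The refutation attached to a family -/

/-- The clause asserting that some pigeon of `I` sits in one of the holes `1, ..., t`, or that some
pigeon of `I` smaller than `i` sits in hole `t + 1`. -/
def posCl (I : Finset ℕ) (t i : ℕ) : Clause (ℕ × ℕ) :=
  ((I ×ˢ Finset.Icc 1 (t + 1)).filter fun v => v.2 ≤ t ∨ v.1 < i).image fun v => (v, true)

lemma mem_posCl {I : Finset ℕ} {t i p j : ℕ} {s : Bool} :
    ((p, j), s) ∈ posCl I t i ↔
      s = true ∧ p ∈ I ∧ 1 ≤ j ∧ (j ≤ t ∨ j = t + 1 ∧ p < i) := by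
  simp only [posCl, Finset.mem_image, Finset.mem_filter, Finset.mem_product, Finset.mem_Icc,
    Prod.mk.injEq]
  constructor
  · rintro ⟨v, ⟨⟨h1, h2, h3⟩, h4⟩, rfl, rfl⟩
    refine ⟨rfl, h1, h2, ?_⟩
    simp only at h3 h4
    omega
  · rintro ⟨rfl, h1, h2, h3⟩
    exact ⟨(p, j), ⟨⟨h1, h2, by simp only; omega⟩, by simp only; omega⟩, rfl, rfl⟩

/-- The sets available after `t` holes: those sets of pigeons from `1, ..., m` that can still survive
the remaining `n - t` rounds. -/
noncomputable def fam (𝓢 : Finset (Finset ℕ)) (m n t : ℕ) : Finset (Finset ℕ) := by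
  classical exact 𝓢.filter fun I => I ⊆ Finset.Icc 1 m ∧ Good 𝓢 (n - t) I

lemma mem_fam {𝓢 : Finset (Finset ℕ)} {m n t : ℕ} {I : Finset ℕ} :
    I ∈ fam 𝓢 m n t ↔ I ∈ 𝓢 ∧ I ⊆ Finset.Icc 1 m ∧ Good 𝓢 (n - t) I := by
  simp [fam]

lemma fam_step {𝓢 : Finset (Finset ℕ)} {m n t : ℕ} {I : Finset ℕ} (h : I ∈ fam 𝓢 m n t)
    (ht : t < n) {i : ℕ} (hi : i ∈ I) : ∃ I' ∈ fam 𝓢 m n (t + 1), I' ⊆ I.erase i := by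
  rw [mem_fam] at h
  obtain ⟨h1, h2, h3⟩ := h
  rw [show n - t = (n - (t + 1)) + 1 by omega] at h3
  obtain ⟨I', h4, h5, h6⟩ := h3.2 i hi
  exact ⟨I', mem_fam.mpr ⟨h4, h5.trans ((Finset.erase_subset _ _).trans h2), h6⟩, h5⟩

/-- The level of a node about to query pigeon `i` for hole `t + 1`; equal to the rank of
`x_{i,t+1}`. -/
def lev (m t i : ℕ) : ℕ := (t + 1) * (m + 2) + i

/-- Nodes at which no pigeon has yet been found in hole `t + 1`, with pigeon `i` next. -/
noncomputable def searchNodes (𝓢 : Finset (Finset ℕ)) (m n : ℕ) :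
    Finset (ℕ × Clause (ℕ × ℕ)) :=
  (((Finset.range (n + 1) ×ˢ 𝓢) ×ˢ Finset.range (m + 2)).filter
    (fun v => v.1.2 ∈ fam 𝓢 m n v.1.1)).image
    fun v => (lev m v.1.1 v.2, posCl v.1.2 v.1.1 v.2)

/-- Nodes at which pigeon `i₀` is known to sit in hole `t + 1` and pigeon `i` is to be checked. -/
noncomputable def foundNodes (𝓢 : Finset (Finset ℕ)) (m n : ℕ) :
    Finset (ℕ × Clause (ℕ × ℕ)) :=
  ((((Finset.range n ×ˢ 𝓢) ×ˢ Finset.range (m + 2)) ×ˢ Finset.range (m + 1)).filter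
    (fun v => v.1.1.2 ∈ fam 𝓢 m n (v.1.1.1 + 1) ∧ 1 ≤ v.2 ∧ v.2 < v.1.2 ∧ v.2 ∉ v.1.1.2)).image
    fun v => (lev m v.1.1.1 v.1.2,
      insert ((v.2, v.1.1.1 + 1), false) (posCl v.1.1.2 v.1.1.1 v.1.2))

/-- Leaves carrying the hole clauses. -/
def holeNodes (m n : ℕ) : Finset (ℕ × Clause (ℕ × ℕ)) :=
  (((Finset.range n ×ˢ Finset.range (m + 1)) ×ˢ Finset.range (m + 1)).filter
    (fun v => 1 ≤ v.1.2 ∧ v.1.2 < v.2)).image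
    fun v => (lev m v.1.1 (v.2 + 1), holeClause (v.1.1 + 1) v.1.2 v.2)

lemma mem_searchNodes {𝓢 : Finset (Finset ℕ)} {m n : ℕ} {s : ℕ × Clause (ℕ × ℕ)} :
    s ∈ searchNodes 𝓢 m n ↔ ∃ t I i, t ≤ n ∧ i ≤ m + 1 ∧ I ∈ fam 𝓢 m n t ∧
      s = (lev m t i, posCl I t i) := by
  simp only [searchNodes, Finset.mem_image, Finset.mem_filter, Finset.mem_product,
    Finset.mem_range, Prod.exists]
  constructor
  · rintro ⟨t, I, i, ⟨⟨⟨h1, h2⟩, h3⟩, h4⟩, rfl⟩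
    exact ⟨t, I, i, by omega, by omega, h4, rfl⟩
  · rintro ⟨t, I, i, h1, h3, h4, rfl⟩
    exact ⟨t, I, i, ⟨⟨⟨by omega, (mem_fam.mp h4).1⟩, by omega⟩, h4⟩, rfl⟩

lemma mem_foundNodes {𝓢 : Finset (Finset ℕ)} {m n : ℕ} {s : ℕ × Clause (ℕ × ℕ)} :
    s ∈ foundNodes 𝓢 m n ↔ ∃ t I i i₀, t < n ∧ i ≤ m + 1 ∧ i₀ ≤ m ∧ I ∈ fam 𝓢 m n (t + 1) ∧
      1 ≤ i₀ ∧ i₀ < i ∧ i₀ ∉ I ∧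
      s = (lev m t i, insert ((i₀, t + 1), false) (posCl I t i)) := by
  simp only [foundNodes, Finset.mem_image, Finset.mem_filter, Finset.mem_product,
    Finset.mem_range, Prod.exists]
  constructor
  · rintro ⟨t, I, i, i₀, ⟨⟨⟨⟨h1, h2⟩, h3⟩, h4⟩, h5, h6, h7, h8⟩, rfl⟩
    exact ⟨t, I, i, i₀, by omega, by omega, by omega, h5, h6, h7, h8, rfl⟩
  · rintro ⟨t, I, i, i₀, h1, h3, h4, h5, h6, h7, h8, rfl⟩
    exact ⟨t, I, i, i₀, ⟨⟨⟨⟨by omega, (mem_fam.mp h5).1⟩, by omega⟩, by omega⟩, h5, h6, h7, h8⟩,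
      rfl⟩

lemma mem_holeNodes {m n : ℕ} {s : ℕ × Clause (ℕ × ℕ)} :
    s ∈ holeNodes m n ↔ ∃ t i₀ i, t < n ∧ 1 ≤ i₀ ∧ i₀ < i ∧ i ≤ m ∧
      s = (lev m t (i + 1), holeClause (t + 1) i₀ i) := by
  simp only [holeNodes, Finset.mem_image, Finset.mem_filter, Finset.mem_product,
    Finset.mem_range, Prod.exists]
  constructor
  · rintro ⟨t, i₀, i, ⟨⟨⟨h1, h2⟩, h3⟩, h4, h5⟩, rfl⟩
    exact ⟨t, i₀, i, by omega, by omega, by omega, by omega, rfl⟩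
  · rintro ⟨t, i₀, i, h1, h2, h3, h4, rfl⟩
    exact ⟨t, i₀, i, ⟨⟨⟨by omega, by omega⟩, by omega⟩, h2, h3⟩, rfl⟩

lemma closedNodes_family (𝓢 : Finset (Finset ℕ)) (m n : ℕ) :
    ClosedNodes (WPHPneg m n) (fun v => v.2 * (m + 2) + v.1) Prod.fst Prod.snd
      (searchNodes 𝓢 m n ∪ (foundNodes 𝓢 m n ∪ holeNodes m n)) := by
  intro s hs
  rcases Finset.mem_union.mp hs with hs | hs
  · obtain ⟨t, I, i, ht, hi, hI, rfl⟩ := mem_searchNodes.mp hs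
    obtain ⟨p, hp⟩ := (mem_fam.mp hI).2.2.nonempty
    have hIm := (mem_fam.mp hI).2.1
    rcases Nat.lt_or_ge t n with htn | htn
    · rcases Nat.lt_or_ge m i with him | him
      · -- No pigeon of `I` sits in hole `t + 1`: any available subset will do.
        obtain ⟨I', hI', hsub⟩ := fam_step hI htn hp
        refine Or.inr (Or.inl ⟨(lev m (t + 1) 0, posCl I' (t + 1) 0),
          Finset.mem_union_left _ (mem_searchNodes.mpr ⟨_, _, _, htn, by omega, hI', rfl⟩), ?_, ?_⟩)
        · simp only [lev]; nlinarith
        · rintro ⟨⟨q, j⟩, b⟩ h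
          simp only [mem_posCl] at h ⊢
          obtain ⟨h1, h2, h3, h4⟩ := h
          have h5 := Finset.mem_of_mem_erase (hsub h2)
          have h6 := Finset.mem_Icc.mp (hIm h5)
          exact ⟨h1, h5, h3, by omega⟩
      · have hnext : (lev m t (i + 1), posCl I t (i + 1)) ∈
            searchNodes 𝓢 m n ∪ (foundNodes 𝓢 m n ∪ holeNodes m n) :=
          Finset.mem_union_left _ (mem_searchNodes.mpr ⟨_, _, _, ht, by omega, hI, rfl⟩)
        by_cases hiI : i ∈ I
        · obtain ⟨I', hI', hsub⟩ := fam_step hI htn hiI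
          have hi1 := Finset.mem_Icc.mp (hIm hiI)
          refine Or.inr (Or.inr ⟨(i, t + 1), le_rfl, _, hnext,
            (lev m t (i + 1), insert ((i, t + 1), false) (posCl I' t (i + 1))),
            Finset.mem_union_right _ (Finset.mem_union_left _ (mem_foundNodes.mpr
              ⟨t, I', i + 1, i, htn, by omega, him, hI', hi1.1, by omega, ?_, rfl⟩)), ?_, ?_,
              ?_, ?_⟩)
          · intro h; exact absurd (hsub h) (Finset.notMem_erase _ _)
          · simp only [lev]; omega
          · simp only [lev]; omega
          · rintro ⟨⟨q, j⟩, b⟩ h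
            simp only [Finset.mem_insert, mem_posCl, Prod.mk.injEq] at h ⊢
            obtain ⟨h1, h2, h3, h4⟩ := h
            by_cases hq : q = i ∧ j = t + 1
            · exact Or.inl ⟨hq, h1⟩
            · exact Or.inr ⟨h1, h2, h3, by omega⟩
          · rintro ⟨⟨q, j⟩, b⟩ h
            simp only [Finset.mem_insert, mem_posCl, Prod.mk.injEq] at h ⊢
            rcases h with h | ⟨h1, h2, h3, h4⟩
            · exact Or.inl h
            · have h5 := Finset.mem_erase.mp (hsub h2)
              exact Or.inr ⟨h1, h5.2, h3, by omega⟩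
        · refine Or.inr (Or.inl ⟨_, hnext, ?_, ?_⟩)
          · simp only [lev]; omega
          · rintro ⟨⟨q, j⟩, b⟩ h
            simp only [mem_posCl] at h ⊢
            obtain ⟨h1, h2, h3, h4⟩ := h
            have : q ≠ i := by rintro rfl; exact hiI h2
            exact ⟨h1, h2, h3, by omega⟩
    · refine Or.inl ⟨pigeonClause n p, Finset.mem_union_left _
        (Finset.mem_image.mpr ⟨p, hIm hp, rfl⟩), ?_⟩
      intro l hl
      obtain ⟨j, hj, rfl⟩ := Finset.mem_image.mp hl
      rw [Finset.mem_Icc] at hj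
      exact mem_posCl.mpr ⟨rfl, hp, hj.1, by omega⟩
  rcases Finset.mem_union.mp hs with hs | hs
  · obtain ⟨t, I, i, i₀, ht, hi, hi₀, hI, h1, hlt, hnot, rfl⟩ := mem_foundNodes.mp hs
    have hIm := (mem_fam.mp hI).2.1
    rcases Nat.lt_or_ge m i with him | him
    · refine Or.inr (Or.inl ⟨(lev m (t + 1) 0, posCl I (t + 1) 0),
          Finset.mem_union_left _ (mem_searchNodes.mpr ⟨_, _, _, ht, by omega, hI, rfl⟩), ?_, ?_⟩)
      · simp only [lev]; nlinarith
      · rintro ⟨⟨q, j⟩, b⟩ h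
        simp only [Finset.mem_insert, mem_posCl] at h ⊢
        obtain ⟨h1, h2, h3, h4⟩ := h
        have h6 := Finset.mem_Icc.mp (hIm h2)
        exact Or.inr ⟨h1, h2, h3, by omega⟩
    · have hnext : (lev m t (i + 1), insert ((i₀, t + 1), false) (posCl I t (i + 1))) ∈
            searchNodes 𝓢 m n ∪ (foundNodes 𝓢 m n ∪ holeNodes m n) :=
        Finset.mem_union_right _ (Finset.mem_union_left _ (mem_foundNodes.mpr
          ⟨_, _, _, _, ht, by omega, hi₀, hI, h1, by omega, hnot, rfl⟩))
      by_cases hiI : i ∈ I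
      · refine Or.inr (Or.inr ⟨(i, t + 1), le_rfl, _, hnext,
            (lev m t (i + 1), holeClause (t + 1) i₀ i),
            Finset.mem_union_right _ (Finset.mem_union_right _ (mem_holeNodes.mpr
              ⟨t, i₀, i, ht, h1, hlt, him, rfl⟩)), ?_, ?_, ?_, ?_⟩)
        · simp only [lev]; omega
        · simp only [lev]; omega
        · rintro ⟨⟨q, j⟩, b⟩ h
          simp only [Finset.mem_insert, mem_posCl, Prod.mk.injEq] at h ⊢
          rcases h with h | ⟨h1, h2, h3, h4⟩
          · exact Or.inr (Or.inl h)
          · by_cases hq : q = i ∧ j = t + 1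
            · exact Or.inl ⟨hq, h1⟩
            · exact Or.inr (Or.inr ⟨h1, h2, h3, by omega⟩)
        · rintro l h
          simp only [holeClause, Finset.mem_insert, Finset.mem_singleton] at h ⊢
          rcases h with h | h
          · exact Or.inr (Or.inl h)
          · exact Or.inl h
      · refine Or.inr (Or.inl ⟨_, hnext, ?_, ?_⟩)
        · simp only [lev]; omega
        · rintro ⟨⟨q, j⟩, b⟩ h
          simp only [Finset.mem_insert, mem_posCl] at h ⊢
          rcases h with h | ⟨h1, h2, h3, h4⟩
          · exact Or.inl h
          · have : q ≠ i := by rintro rfl; exact hiI h2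
            exact Or.inr ⟨h1, h2, h3, by omega⟩
  · obtain ⟨t, i₀, i, ht, h1, hlt, him, rfl⟩ := mem_holeNodes.mp hs
    refine Or.inl ⟨holeClause (t + 1) i₀ i, Finset.mem_union_right _
      (Finset.mem_image.mpr ⟨(i₀, i, t + 1), ?_, rfl⟩), subset_rfl⟩
    simp only [Finset.mem_filter, Finset.mem_product, Finset.mem_Icc]
    omega

lemma exists_refutation_of_good (𝓢 : Finset (Finset ℕ)) (m n : ℕ) (U : Finset ℕ)
    (hU : U ∈ 𝓢) (hUm : U ⊆ Finset.Icc 1 m) (hgood : Good 𝓢 n U) :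
    ∃ P : ResolutionProof (WPHPneg m n), P.Regular ∧
      P.size ≤ (n + 1) * 𝓢.card * (m + 2) +
        (n * 𝓢.card * (m + 2) * (m + 1) + n * (m + 1) * (m + 1)) := by
  obtain ⟨P, hP, hsize⟩ := exists_regular (WPHPneg m n) _ _ _ _ (closedNodes_family 𝓢 m n)
    (lev m 0 0, posCl U 0 0)
    (Finset.mem_union_left _ (mem_searchNodes.mpr
      ⟨0, U, 0, by omega, by omega, mem_fam.mpr ⟨hU, hUm, hgood⟩, rfl⟩))
    (by
      ext ⟨⟨p, j⟩, b⟩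
      simp only [mem_posCl, Finset.notMem_empty, iff_false]
      omega)
  refine ⟨P, hP, hsize.trans ((Finset.card_union_le _ _).trans (add_le_add ?_
    ((Finset.card_union_le _ _).trans (add_le_add ?_ ?_))))⟩
  · refine Finset.card_image_le.trans ((Finset.card_filter_le _ _).trans ?_)
    simp only [Finset.card_product, Finset.card_range, le_refl]
  · refine Finset.card_image_le.trans ((Finset.card_filter_le _ _).trans ?_)
    simp only [Finset.card_product, Finset.card_range, le_refl]
  · refine Finset.card_image_le.trans ((Finset.card_filter_le _ _).trans ?_)
    simp only [Finset.card_product, Finset.card_range, le_refl]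

/-! ### Choice of parameters -/

lemma size_bound (m n K : ℕ) (hm : 2 ≤ m) (hn : n ≤ m) (hK : K ≤ m ^ 3) :
    (n + 1) * K * (m + 2) + (n * K * (m + 2) * (m + 1) + n * (m + 1) * (m + 1)) ≤ m ^ 11 := by
  have h1 : m + 2 ≤ m ^ 2 := by nlinarith
  have h2 : m + 1 ≤ m ^ 2 := by omega
  have h3 : n + 1 ≤ m ^ 2 := by omega
  have h4 : n ≤ m ^ 2 := by omega
  have hm1 : 1 ≤ m := by omega
  have a1 : (n + 1) * K * (m + 2) ≤ m ^ 9 :=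
    calc _ ≤ m ^ 2 * m ^ 3 * m ^ 2 := by gcongr
      _ = m ^ 7 := by ring
      _ ≤ m ^ 9 := Nat.pow_le_pow_right hm1 (by norm_num)
  have a2 : n * K * (m + 2) * (m + 1) ≤ m ^ 9 :=
    calc _ ≤ m ^ 2 * m ^ 3 * m ^ 2 * m ^ 2 := by gcongr
      _ = m ^ 9 := by ring
  have a3 : n * (m + 1) * (m + 1) ≤ m ^ 9 :=
    calc _ ≤ m ^ 2 * m ^ 2 * m ^ 2 := by gcongr
      _ = m ^ 6 := by ring
      _ ≤ m ^ 9 := Nat.pow_le_pow_right hm1 (by norm_num)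
  have a4 : 4 * m ^ 9 ≤ m ^ 11 :=
    calc 4 * m ^ 9 ≤ m ^ 2 * m ^ 9 := by gcongr; nlinarith
      _ = m ^ 11 := by ring
  omega

/-- For `n ≥ 2` and `m > exp (5 √(n log n))` the tree of arity `b + 1` and depth `D` with
`b = ⌈√(n log n)⌉` and `D = ⌈n / b⌉` has enough rounds, fits into `m` pigeons, and yields a family
of polynomial size. -/
lemma exists_params (n m : ℕ) (hn : 2 ≤ n)
    (hm : Real.exp (5 * Real.sqrt ((n : ℝ) * Real.log n)) < m) :
    ∃ b D : ℕ, n ≤ D * b ∧ 2 * (b + 1) ^ D ≤ m ∧ (2 * (b + 1)) ^ D * 2 ^ (b + 1) ≤ m ^ 3 ∧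
      n ≤ m := by
  set L := Real.sqrt ((n : ℝ) * Real.log n) with hL
  have hn2 : (2 : ℝ) ≤ n := by exact_mod_cast hn
  have hlog2 : (0.69 : ℝ) ≤ Real.log n :=
    (by linarith [Real.log_two_gt_d9] : (0.69 : ℝ) ≤ Real.log 2).trans
      (Real.log_le_log (by norm_num) hn2)
  have hlogn : Real.log n ≤ n := Real.log_le_self (by linarith)
  have hsq : L * L = n * Real.log n := Real.mul_self_sqrt (by nlinarith)
  have hL1 : 1 ≤ L := by
    rw [hL, Real.one_le_sqrt]; nlinarith
  have hLn : L ≤ n := by nlinarith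
  have hlogL : Real.log n ≤ L := by nlinarith
  set b := ⌈L⌉₊ with hb
  have hbL : L ≤ b := Nat.le_ceil L
  have hbL' : (b : ℝ) < L + 1 := Nat.ceil_lt_add_one (by linarith)
  have hb0 : (0 : ℝ) < b := by linarith
  have hb1 : 1 ≤ b := by exact_mod_cast hb0
  set D := ⌈(n : ℝ) / b⌉₊ with hD
  have hDl : (n : ℝ) / b ≤ D := Nat.le_ceil _
  have hDu : (D : ℝ) < n / b + 1 := Nat.ceil_lt_add_one (by positivity)
  have hnD : n ≤ D * b := by
    rw [div_le_iff₀ hb0] at hDl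
    exact_mod_cast hDl
  have hlogb : Real.log (b + 1) ≤ 2 * Real.log n := by
    rw [show (2 : ℝ) * Real.log n = Real.log ((n : ℝ) ^ 2) by rw [Real.log_pow]; norm_num]
    refine Real.log_le_log (by linarith) ?_
    nlinarith
  have hDL : (D : ℝ) * Real.log n ≤ 2 * L := by
    have h1 : (n : ℝ) / b * Real.log n ≤ L := by
      rw [div_mul_eq_mul_div, div_le_iff₀ hb0, ← hsq]
      nlinarith
    nlinarith
  have hpow : ((b : ℝ) + 1) ^ D ≤ Real.exp (4 * L) := by
    rw [← Real.exp_log (show (0 : ℝ) < ((b : ℝ) + 1) ^ D by positivity), Real.log_pow]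
    refine Real.exp_le_exp.mpr ?_
    have h2 : (0 : ℝ) ≤ D := by positivity
    nlinarith
  have h2e : (2 : ℝ) ≤ Real.exp L := by
    have := Real.add_one_le_exp L
    linarith
  have hfit : 2 * (b + 1) ^ D ≤ m := by
    have : (2 : ℝ) * ((b : ℝ) + 1) ^ D ≤ m := by
      calc (2 : ℝ) * ((b : ℝ) + 1) ^ D ≤ Real.exp L * Real.exp (4 * L) := by gcongr
        _ = Real.exp (5 * L) := by rw [← Real.exp_add]; ring_nf
        _ ≤ m := hm.le
    exact_mod_cast this
  have h2B : 2 ^ (b + 1) ≤ m := by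
    have h1 : (2 : ℝ) ^ (b + 1) ≤ m := by
      have h3 : (2 : ℝ) ≤ Real.exp 1 := by
        have := Real.add_one_le_exp (1 : ℝ)
        linarith
      calc (2 : ℝ) ^ (b + 1) ≤ Real.exp 1 ^ (b + 1) := by gcongr
        _ = Real.exp ((b : ℝ) + 1) := by rw [← Real.exp_nat_mul]; push_cast; ring_nf
        _ ≤ Real.exp (5 * L) := Real.exp_le_exp.mpr (by linarith)
        _ ≤ m := hm.le
    exact_mod_cast h1
  refine ⟨b, D, hnD, hfit, ?_, ?_⟩
  · have h1 : 2 ^ D ≤ (b + 1) ^ D := Nat.pow_le_pow_left (by omega) D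
    have h2 : (b + 1) ^ D ≤ m := by omega
    calc (2 * (b + 1)) ^ D * 2 ^ (b + 1) = 2 ^ D * (b + 1) ^ D * 2 ^ (b + 1) := by rw [mul_pow]
      _ ≤ m * m * m := by gcongr; exact h1.trans h2
      _ = m ^ 3 := by ring
  · have : (n : ℝ) ≤ m := by
      rw [← Real.exp_log (show (0 : ℝ) < n by linarith)]
      exact (Real.exp_le_exp.mpr (by linarith)).trans hm.le
    exact_mod_cast this

/-- The family for the case of a single hole. -/
lemma good_one_pair : Good {{1, 2}, {1}, {2}} 1 {1, 2} := by
  refine ⟨by simp, fun i hi => ?_⟩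
  rcases Finset.mem_insert.mp hi with rfl | hi
  · exact ⟨{2}, by simp, by decide, by simp [Good]⟩
  · rw [Finset.mem_singleton] at hi
    subst hi
    exact ⟨{1}, by simp, by decide, by simp [Good]⟩

/-- Buss–Pitassi: there are constants `c > 1` and `k` such that
for every `n ≥ 1` and every `m > c^{√(n·log n)}`, the formula `¬WPHP^m_n` has a
Regular Resolution refutation of length at most `m^k`. -/
theorem buss_pitassi_wphp_upper_bound :
    ∃ c : ℝ, 1 < c ∧ ∃ k : ℕ, ∀ n : ℕ, 1 ≤ n →
      ∀ m : ℕ, c ^ Real.sqrt ((n : ℝ) * Real.log n) < (m : ℝ) →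
        ∃ P : ResolutionProof (WPHPneg m n), P.Regular ∧ P.size ≤ m ^ k := by
  refine ⟨Real.exp 5, by simp, 11, fun n hn m hm => ?_⟩
  rw [← Real.exp_mul] at hm
  rcases Nat.lt_or_ge 1 n with hn2 | hn1
  · obtain ⟨b, D, h1, h2, h3, h4⟩ := exists_params n m hn2 hm
    -- The block with index `1`, rather than `0`, lies inside `1, ..., m`.
    obtain ⟨𝓢, hcard, hmem, hgood⟩ := exists_good b D 1
    have hpos : 0 < (b + 1) ^ D := by positivity
    obtain ⟨P, hP, hsize⟩ := exists_refutation_of_good 𝓢 m n _ hmem (by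
      intro i hi
      rw [blk, Finset.mem_Ico] at hi
      rw [Finset.mem_Icc]
      omega) (hgood.of_le h1)
    exact ⟨P, hP, hsize.trans (size_bound m n _ (by omega) h4 (hcard.trans h3))⟩
  · obtain rfl : n = 1 := by omega
    have hm2 : 2 ≤ m := by
      simp only [Nat.cast_one, Real.log_one, mul_zero, Real.sqrt_zero, Real.exp_zero] at hm
      exact_mod_cast hm
    obtain ⟨P, hP, hsize⟩ := exists_refutation_of_good {{1, 2}, {1}, {2}} m 1 {1, 2} (by simp) (by
      intro i hi
      simp only [Finset.mem_insert, Finset.mem_singleton] at hi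
      rw [Finset.mem_Icc]
      omega) good_one_pair
    refine ⟨P, hP, hsize.trans (size_bound m 1 _ hm2 (by omega) ?_)⟩
    calc _ ≤ 3 := Finset.card_le_three
      _ ≤ 2 ^ 3 := by norm_num
      _ ≤ m ^ 3 := Nat.pow_le_pow_left hm2 3
end

section
/- (Razborov) There exists a constant c > 0 such that for every n ≥ 1 and every m ≥ n+1, every Resolution refutation of the CNF formula ¬WPHP^m_n has length at least c · 2^{n^{1/3}}. -/
/-! ### Functions of bounded degree in each coordinate -/

/-- `f` is, in each coordinate `i` separately, a polynomial of degree less than `D i`. -/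
def CoordDegLT {ι : Type} [DecidableEq ι] (D : ι → ℕ) (f : (ι → ℚ) → ℚ) : Prop :=
  ∀ (i : ι) (y : ι → ℚ), ∃ q : Polynomial ℚ, q.degree < (D i : WithBot ℕ) ∧
    ∀ t, f (Function.update y i t) = q.eval t

section Algebra

open Finset

variable {ι : Type} [DecidableEq ι]

lemma CoordDegLT.eq_zero {D : ι → ℕ} {f : (ι → ℚ) → ℚ} (hf : CoordDegLT D f)
    (i : ι) (y : ι → ℚ) (Z : Finset ℚ) (hZ : D i ≤ Z.card)
    (h : ∀ t ∈ Z, f (Function.update y i t) = 0) : f y = 0 := by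
  obtain ⟨q, hq, hev⟩ := hf i y
  have h0 : q = 0 := Polynomial.eq_zero_of_degree_lt_of_eval_finset_eq_zero Z
    (lt_of_lt_of_le hq (by exact_mod_cast hZ)) (fun t ht => by rw [← hev]; exact h t ht)
  have := hev (y i)
  rwa [Function.update_eq_self, h0, Polynomial.eval_zero] at this

/-- Vanishing on a box propagates to all points that lie in the box on its short sides
(`#B i < D i`): along a side with at least `D i` points the degree bound forces the function to
vanish identically. -/
lemma CoordDegLT.eq_zero_of_box [Fintype ι] {D : ι → ℕ} {f : (ι → ℚ) → ℚ}
    (hf : CoordDegLT D f) (B : ι → Finset ℚ)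
    (h : ∀ y, (∀ i, y i ∈ B i) → f y = 0) (y : ι → ℚ)
    (hy : ∀ i, (B i).card < D i → y i ∈ B i) : f y = 0 := by
  suffices H : ∀ U : Finset ι, (∀ i ∈ U, D i ≤ (B i).card) →
      ∀ y, (∀ i, i ∉ U → y i ∈ B i) → f y = 0 by
    refine H (univ.filter fun i => D i ≤ (B i).card) (by simp) y ?_
    intro i hi
    exact hy i (by simpa using hi)
  intro U
  induction U using Finset.induction_on with
  | empty => intro _ y hy; exact h y (fun i => hy i (by simp))
  | insert i U hi ih =>
    intro hU y hy
    refine hf.eq_zero i y (B i) (hU i (by simp)) fun t ht => ?_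
    refine ih (fun k hk => hU k (by simp [hk])) _ fun k hk => ?_
    by_cases hki : k = i
    · subst hki; simpa using ht
    · rw [Function.update_of_ne hki]; exact hy k (by simp [hki, hk])

/-- The polynomial function with prescribed values `a` on the grid `∏ i, {0, …, D i - 1}`
(tensor product Lagrange interpolation). -/
noncomputable def gridPoly [Fintype ι] (D : ι → ℕ) (a : (∀ i, Fin (D i)) → ℚ) (y : ι → ℚ) : ℚ :=
  ∑ e, a e * ∏ i, (Lagrange.basis univ (fun k : Fin (D i) => ((k : ℕ) : ℚ)) (e i)).eval (y i)

lemma gridPoly_coordDegLT [Fintype ι] (D : ι → ℕ) (a : (∀ i, Fin (D i)) → ℚ) :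
    CoordDegLT D (gridPoly D a) := by
  intro i y
  refine ⟨∑ e, Polynomial.C (a e * ∏ k ∈ univ.erase i,
    (Lagrange.basis univ (fun l : Fin (D k) => ((l : ℕ) : ℚ)) (e k)).eval (y k)) *
      Lagrange.basis univ (fun l : Fin (D i) => ((l : ℕ) : ℚ)) (e i), ?_, ?_⟩
  · refine (Polynomial.degree_sum_le _ _).trans_lt ?_
    rw [Finset.sup_lt_iff (WithBot.bot_lt_coe _)]
    intro e _
    rw [← Polynomial.smul_eq_C_mul]
    refine (Polynomial.degree_smul_le _ _).trans_lt ?_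
    rw [Lagrange.degree_basis (fun p _ q _ h => Fin.ext (Nat.cast_injective (R := ℚ) h)) (mem_univ _)]
    rw [card_univ, Fintype.card_fin]
    have := (e i).pos
    exact_mod_cast Nat.sub_lt this one_pos
  · intro t
    rw [gridPoly, Polynomial.eval_finsetSum]
    refine sum_congr rfl fun e _ => ?_
    rw [Polynomial.eval_mul, Polynomial.eval_C, ← mul_prod_erase univ _ (mem_univ i),
      Function.update_self]
    have : ∏ k ∈ univ.erase i, (Lagrange.basis univ (fun l : Fin (D k) => ((l : ℕ) : ℚ)) (e k)).eval
        (Function.update y i t k) = ∏ k ∈ univ.erase i,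
        (Lagrange.basis univ (fun l : Fin (D k) => ((l : ℕ) : ℚ)) (e k)).eval (y k) := by
      refine prod_congr rfl fun k hk => ?_
      rw [Function.update_of_ne (ne_of_mem_erase hk)]
    rw [this]; ring

lemma gridPoly_grid [Fintype ι] (D : ι → ℕ) (a : (∀ i, Fin (D i)) → ℚ) (e : ∀ i, Fin (D i)) :
    gridPoly D a (fun i => ((e i : ℕ) : ℚ)) = a e := by
  have hinj : ∀ i, Set.InjOn (fun k : Fin (D i) => ((k : ℕ) : ℚ)) (univ : Finset (Fin (D i))) :=
    fun i p _ q _ h => Fin.ext (Nat.cast_injective (R := ℚ) h)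
  rw [gridPoly, sum_eq_single e]
  · rw [prod_eq_one, mul_one]
    intro i _
    exact Lagrange.eval_basis_self (v := fun k : Fin (D i) => ((k : ℕ) : ℚ)) (hinj i) (mem_univ _)
  · intro e' _ hne
    obtain ⟨i, hi⟩ := Function.ne_iff.mp hne
    rw [prod_eq_zero (mem_univ i), mul_zero]
    exact Lagrange.eval_basis_of_ne (v := fun k : Fin (D i) => ((k : ℕ) : ℚ)) hi (mem_univ _)
  · simp

/-- Dimension count: the functions of degree `< D i` in coordinate `i` form a space of dimension
`∏ D i`, so some nonzero such function vanishes on any given set of fewer than `∏ D i` points. -/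
lemma exists_poly_vanishing [Fintype ι] {κ : Type} (Hv : Finset κ) (D : ι → ℕ)
    (B : κ → ι → Finset ℚ) (hcard : ∑ v ∈ Hv, ∏ i, (B v i).card < ∏ i, D i) :
    ∃ f : (ι → ℚ) → ℚ, CoordDegLT D f ∧ (∃ y, f y ≠ 0) ∧
      ∀ v ∈ Hv, ∀ y, (∀ i, y i ∈ B v i) → f y = 0 := by
  classical
  let Φ : ((∀ i, Fin (D i)) → ℚ) →ₗ[ℚ]
      ((Σ v : Hv, ∀ i, B v.1 i) → ℚ) :=
    { toFun := fun a z => gridPoly D a (fun i => (z.2 i : ℚ))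
      map_add' := by
        intro a b; ext z
        simp [gridPoly, add_mul, sum_add_distrib]
      map_smul' := by
        intro c a; ext z
        simp [gridPoly, mul_assoc, mul_sum] }
  have hlt : Module.finrank ℚ ((Σ v : Hv, ∀ i, B v.1 i) → ℚ) <
      Module.finrank ℚ ((∀ i, Fin (D i)) → ℚ) := by
    rw [Module.finrank_fintype_fun_eq_card, Module.finrank_fintype_fun_eq_card,
      Fintype.card_sigma, Fintype.card_pi]
    simp only [Fintype.card_pi, Fintype.card_coe, Fintype.card_fin]
    rwa [Finset.sum_coe_sort Hv (fun v => ∏ i, (B v i).card)]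
  obtain ⟨a, ha, hne⟩ := Submodule.exists_mem_ne_zero_of_ne_bot
    (LinearMap.ker_ne_bot_of_finrank_lt (f := Φ) hlt)
  obtain ⟨e, he⟩ := Function.ne_iff.mp hne
  refine ⟨gridPoly D a, gridPoly_coordDegLT D a, ⟨_, by rw [gridPoly_grid D a e]; exact he⟩, ?_⟩
  intro v hv y hy
  exact congrFun (LinearMap.mem_ker.mp ha) ⟨⟨v, hv⟩, fun i => ⟨y i, hy i⟩⟩

end Algebra

/-! ### Vanishing along the nodes of a refutation -/

section Game

open Finset

variable {ι : Type} [DecidableEq ι] [Fintype ι]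

/-- If `f` vanishes at every point placing the pigeons of `I` injectively into their lists `A i`,
then the pigeons in `U`, whose lists are long, need no constraint: after the at most `w` values
taken by other pigeons are removed, the list of `i ∈ U` still has `D i` points, enough to force `f`
to vanish identically in that coordinate. -/
lemma CoordDegLT.eq_zero_of_extend {D : ι → ℕ} {f : (ι → ℚ) → ℚ} (hf : CoordDegLT D f)
    (A : ι → Finset ℚ) (w : ℕ) (I : Finset ι) (hI : I.card ≤ w)
    (h : ∀ y : ι → ℚ, (∀ i ∈ I, y i ∈ A i) → Set.InjOn y I → f y = 0)
    (U : Finset ι) (hU : ∀ i ∈ U, D i + w ≤ (A i).card) (y : ι → ℚ)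
    (hy : ∀ i ∈ I \ U, y i ∈ A i) (hinj : Set.InjOn y (I \ U : Finset ι)) : f y = 0 := by
  induction U using Finset.induction_on generalizing y with
  | empty => exact h y (by simpa using hy) (by simpa using hinj)
  | insert k U hk ih =>
    by_cases hkI : k ∈ I
    · refine hf.eq_zero k y (A k \ (I \ insert k U).image y) ?_ fun t ht => ?_
      · have h1 : ((I \ insert k U).image y).card ≤ w :=
          card_image_le.trans ((card_le_card sdiff_subset).trans hI)
        have h2 := le_card_sdiff ((I \ insert k U).image y) (A k)
        have h3 := hU k (by simp)
        omega
      · rw [mem_sdiff] at ht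
        have hmem : ∀ i ∈ I \ U, i ≠ k → i ∈ I \ insert k U := by
          intro i hi hik
          simp only [mem_sdiff, mem_insert, not_or] at hi ⊢
          exact ⟨hi.1, hik, hi.2⟩
        refine ih (fun i hi => hU i (by simp [hi])) _ (fun i hi => ?_) ?_
        · by_cases hik : i = k
          · subst hik; simpa using ht.1
          · rw [Function.update_of_ne hik]; exact hy i (hmem i hi hik)
        · intro i hi l hl hil
          by_cases hik : i = k <;> by_cases hlk : l = k
          · rw [hik, hlk]
          · rw [hik, Function.update_self, Function.update_of_ne hlk] at hil
            exact absurd (mem_image.mpr ⟨l, hmem l hl hlk, hil.symm⟩) ht.2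
          · rw [hlk, Function.update_self, Function.update_of_ne hik] at hil
            exact absurd (mem_image.mpr ⟨i, hmem i hi hik, hil⟩) ht.2
          · rw [Function.update_of_ne hik, Function.update_of_ne hlk] at hil
            exact hinj (hmem i hi hik) (hmem l hl hlk) hil
    · have : I \ insert k U = I \ U := by
        ext i
        simp only [mem_sdiff, mem_insert, not_or]
        constructor
        · tauto
        · rintro ⟨h1, h2⟩
          exact ⟨h1, fun h => hkI (h ▸ h1), h2⟩
      rw [this] at hy hinj
      exact ih (fun i hi => hU i (by simp [hi])) y hy hinj

/-- The combinatorial core, for an abstract dag on `Fin S` with lists `A u i` of holes available to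
pigeon `i` at node `u`. Pigeon `i` is *visible* at `u` if `#(A u i) ≤ D i + w`, and `u` is *heavy* if
more than `w` pigeons are visible. At a node that is not `bad`, either some list is empty (a leaf),
or every injective placement of some pigeons into their lists remains valid at a suitable smaller
node which is again not `bad` and whose lists are shorter by at most one (`hmove`). At the root no
pigeon is visible. Then the boxes of heavy nodes cannot be small in total: otherwise there is a
nonzero `f` of degree `< D i` in coordinate `i` vanishing on all of them, and induction over the
nodes shows that `f` vanishes on all valid placements of the visible pigeons of a light node, hence
everywhere at the root. -/
lemma game_lower_bound {S : ℕ} (A : Fin S → ι → Finset ℚ) (bad : Fin S → Prop)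
    (D : ι → ℕ) (w : ℕ) (root : Fin S)
    (hmove : ∀ u, ¬ bad u → (∃ i, A u i = ∅) ∨ ∀ (K : Finset ι) (y : ι → ℚ),
      (∀ i ∈ K, y i ∈ A u i) → Set.InjOn y K →
        ∃ v, v < u ∧ ¬ bad v ∧ (∀ i ∈ K, y i ∈ A v i) ∧ ∀ i, (A u i).card ≤ (A v i).card + 1)
    (hroot : ¬ bad root) (hrootA : ∀ i, D i + w < (A root i).card)
    (hheavy : ∑ v ∈ univ.filter (fun v => w < (univ.filter fun i => (A v i).card ≤ D i + w).card),
      ∏ i, min (A v i).card (D i) < ∏ i, D i) : False := by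
  classical
  set I : Fin S → Finset ι := fun v => univ.filter fun i => (A v i).card ≤ D i + w with hIdef
  -- Sides longer than `D i` are replaced by an arbitrary set of `D i` points: by the degree bound,
  -- vanishing on the shortened box amounts to the same.
  let B : Fin S → ι → Finset ℚ := fun v i =>
    if (A v i).card < D i then A v i else (range (D i)).image (fun k : ℕ => (k : ℚ))
  have hBcard : ∀ v i, (B v i).card = min (A v i).card (D i) := by
    intro v i
    by_cases h : (A v i).card < D i
    · simp [B, h, h.le]
    · simp only [B, h, if_false]
      rw [card_image_of_injective _ Nat.cast_injective, card_range]
      omega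
  obtain ⟨f, hf, ⟨y0, hy0⟩, hvan⟩ := exists_poly_vanishing
    (univ.filter (fun v => w < (I v).card)) D B (by simpa only [hBcard] using hheavy)
  have key : ∀ N : ℕ, ∀ u : Fin S, (u : ℕ) = N → ¬ bad u → (I u).card ≤ w → ∀ y : ι → ℚ,
      (∀ i ∈ I u, y i ∈ A u i) → Set.InjOn y (I u) → f y = 0 := by
    intro N
    induction N using Nat.strong_induction_on with
    | _ N ih =>
    intro u huN hu hlight y hy hinj
    rcases hmove u hu with ⟨i, hi⟩ | hm
    · have := hy i (by simp [I, hi])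
      simp [hi] at this
    · obtain ⟨v, hvu, hv, hyv, hcard⟩ := hm (I u) y hy hinj
      have hnew : ∀ i, i ∉ I u → D i + w ≤ (A v i).card := by
        intro i hi
        have h1 : D i + w < (A u i).card := by simpa [I] using hi
        have := hcard i
        omega
      -- A light `v` is covered by the induction hypothesis, a heavy `v` by the choice of `f`; either
      -- way the pigeons not visible at `u` have lists at `v` too long to matter.
      by_cases hvl : (I v).card ≤ w
      · refine hf.eq_zero_of_extend (A v) w (I v) hvl
          (fun y' h1 h2 => ih v (by rw [← huN]; exact hvu) v rfl hv hvl y' h1 h2)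
          (I v \ I u) (fun i hi => hnew i (mem_sdiff.mp hi).2) y ?_ ?_
        · intro i hi
          refine hyv i ?_
          simp only [mem_sdiff, not_and, not_not] at hi
          exact hi.2 hi.1
        · refine hinj.mono fun i hi => ?_
          simp only [coe_sdiff, Set.mem_sdiff, mem_coe, not_and, not_not] at hi
          exact hi.2 hi.1
      · refine hf.eq_zero_of_box (B v) (hvan v (by simpa using hvl)) y fun i hi => ?_
        rw [hBcard] at hi
        have hlt : (A v i).card < D i := by omega
        have hiu : i ∈ I u := by
          by_contra hc
          have := hnew i hc
          omega
        simpa [B, hlt] using hyv i hiu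
  have hIroot : I root = ∅ := by
    refine filter_eq_empty_iff.mpr fun i _ => ?_
    have := hrootA i
    omega
  exact hy0 (key _ root rfl hroot (by simp [hIroot]) y0 (by simp [hIroot]) (by simp [hIroot]))

end Game

/-! ### Random thresholds -/

section Filter

open Finset

/-- The contribution of a pigeon with threshold `D` and `c` available holes to the moment bounded in
`exists_thresholds`: a reward `E` if it is visible, times the `s`-th power of the relative size
`min 1 (c / D)` of the corresponding box side. -/
noncomputable def pigeonFactor (E : ℝ) (w s D c : ℕ) : ℝ :=
  (if c ≤ D + w then E else 1) * (min 1 ((c : ℝ) / D)) ^ s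

lemma pigeonFactor_le {E : ℝ} (hE : 1 ≤ E) (w s D c : ℕ) : pigeonFactor E w s D c ≤ E := by
  have h : (min 1 ((c : ℝ) / D)) ^ s ≤ 1 := pow_le_one₀ (by positivity) (min_le_left _ _)
  have h0 : 0 ≤ (min 1 ((c : ℝ) / D)) ^ s := by positivity
  unfold pigeonFactor
  split_ifs <;> nlinarith

lemma pigeonFactor_nonneg {E : ℝ} (hE : 1 ≤ E) (w s D c : ℕ) : 0 ≤ pigeonFactor E w s D c := by
  have h0 : 0 ≤ (min 1 ((c : ℝ) / D)) ^ s := by positivity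
  unfold pigeonFactor
  split_ifs <;> nlinarith

lemma inv_pow_le_quadratic (M y s : ℕ) (hM : 0 < M) :
    ((M : ℝ) / (M + y)) ^ s ≤ 1 - (s / M : ℝ) * y + (s / M : ℝ) ^ 2 * (y : ℝ) ^ 2 := by
  have hM' : (0 : ℝ) < M := by exact_mod_cast hM
  have h1 : 1 + (s : ℝ) * (y / M : ℝ) ≤ (1 + (y / M : ℝ)) ^ s :=
    one_add_mul_le_pow (by have : (0 : ℝ) ≤ y / M := by positivity
                           linarith) s
  set z : ℝ := (s : ℝ) * (y / M : ℝ) with hz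
  have hz0 : 0 ≤ z := by positivity
  have h2 : ((M : ℝ) / (M + y)) ^ s = ((1 + (y / M : ℝ)) ^ s)⁻¹ := by
    rw [← inv_pow]; congr 1; field_simp
  have h3 : 1 - (s / M : ℝ) * y + (s / M : ℝ) ^ 2 * (y : ℝ) ^ 2 = 1 - z + z ^ 2 := by
    rw [hz]; ring
  rw [h2, h3]
  calc ((1 + (y / M : ℝ)) ^ s)⁻¹ ≤ (1 + z)⁻¹ := by gcongr
    _ ≤ 1 - z + z ^ 2 := by
      rw [inv_le_iff_one_le_mul₀ (by positivity)]
      nlinarith [pow_nonneg hz0 3]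

/-- A geometric variable with weights `a ^ y / (a + 1) ^ (y + 1)` has mean `a` and second moment
`a (2 a + 1)`; the partial sums are below the full sum because `1 - z + z ^ 2` is nonnegative. The
telescoping function `Q` is the conditional expectation given that the variable is at least `y`,
by memorylessness. -/
lemma geom_sum_quadratic_le (a τ : ℝ) (ha : 0 < a) (K : ℕ) :
    ∑ y ∈ range K, (1 / (a + 1)) * (a / (a + 1)) ^ y * (1 - τ * y + τ ^ 2 * (y : ℝ) ^ 2) ≤
      1 - τ * a + τ ^ 2 * (a * (2 * a + 1)) := by
  let Q : ℕ → ℝ := fun y => 1 - τ * (y + a) + τ ^ 2 * ((y : ℝ) ^ 2 + 2 * y * a + a * (2 * a + 1))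
  have hQ : ∀ y, 0 ≤ Q y := by
    intro y
    have : Q y = (1 - τ * (y + a) / 2) ^ 2 + (3 / 4) * (τ * (y + a)) ^ 2 + τ ^ 2 * (a * a + a) := by
      simp only [Q]; ring
    rw [this]; positivity
  have htel : ∀ K : ℕ, ∑ y ∈ range K, (1 / (a + 1)) * (a / (a + 1)) ^ y *
      (1 - τ * y + τ ^ 2 * (y : ℝ) ^ 2) = Q 0 - (a / (a + 1)) ^ K * Q K := by
    intro K
    induction K with
    | zero => simp
    | succ K ih =>
      have hrec : 1 / (a + 1) * (1 - τ * K + τ ^ 2 * (K : ℝ) ^ 2) =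
          Q K - a / (a + 1) * Q (K + 1) := by
        simp only [Q]
        push_cast
        field_simp
        ring
      rw [sum_range_succ, ih, pow_succ]
      linear_combination (a / (a + 1)) ^ K * hrec
  rw [htel]
  have : 0 ≤ (a / (a + 1)) ^ K * Q K := mul_nonneg (by positivity) (hQ K)
  have h0 : Q 0 = 1 - τ * a + τ ^ 2 * (a * (2 * a + 1)) := by simp [Q]
  linarith

lemma geom_sum_eq_one_sub (a : ℝ) (ha : 0 < a) (K : ℕ) :
    ∑ y ∈ range K, (1 / (a + 1)) * (a / (a + 1)) ^ y = 1 - (a / (a + 1)) ^ K := by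
  induction K with
  | zero => simp
  | succ K ih => rw [sum_range_succ, ih, pow_succ]; field_simp; ring

/-- For a geometrically distributed threshold `t + 1`, truncated at `X`, the expected factor of a
pigeon is at most `1`, whatever the number `c` of its holes. Below `t0 = c - w - 1` the pigeon is
invisible. Conditionally on `t ≥ t0`, memorylessness makes `t - t0` geometric again; the pigeon may
then gain the reward `E`, but with probability `(a / (a + 1)) ^ w` the threshold exceeds `c`, after
which `(c / D) ^ s` decreases enough to pay for `E` by `hE1`. -/
lemma sum_pigeonFactor_le {E a : ℝ} (hE : 1 ≤ E) (ha : 0 < a) (w s M X c : ℕ)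
    (hM : X + w + 1 ≤ M)
    (hE1 : E * (1 - (a / (a + 1)) ^ w *
      ((s / M : ℝ) * a - (s / M : ℝ) ^ 2 * (a * (2 * a + 1)))) ≤ 1) :
    ∑ t ∈ range X, (1 / (a + 1)) * (a / (a + 1)) ^ t * pigeonFactor E w s (t + 1) c ≤ 1 := by
  set l : ℝ := a / (a + 1) with hl
  have hl0 : 0 ≤ l := by positivity
  have hp : ∀ t : ℕ, 0 ≤ 1 / (a + 1) * l ^ t := fun t => by positivity
  set t0 := c - w - 1 with ht0
  have hsmall : ∀ t, t < t0 → pigeonFactor E w s (t + 1) c ≤ 1 := by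
    intro t ht
    rw [pigeonFactor, if_neg (by omega), one_mul]
    exact pow_le_one₀ (by positivity) (min_le_left _ _)
  rcases le_or_gt X t0 with hX | hX
  · calc _ ≤ ∑ t ∈ range X, (1 / (a + 1)) * l ^ t := by
          refine sum_le_sum fun t ht => ?_
          exact mul_le_of_le_one_right (hp t) (hsmall t ((mem_range.mp ht).trans_le hX))
      _ = 1 - l ^ X := geom_sum_eq_one_sub a ha X
      _ ≤ 1 := by linarith [pow_nonneg hl0 X]
  · have hMpos : 0 < M := by omega
    -- `E * h k` bounds the factor at distance `k` beyond `t0`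
    let h : ℕ → ℝ := fun k => if k < w then 1 else
      1 - (s / M : ℝ) * ((k - w : ℕ) : ℝ) + (s / M : ℝ) ^ 2 * (((k - w : ℕ) : ℝ)) ^ 2
    have hh0 : ∀ k, 0 ≤ h k := by
      intro k
      simp only [h]
      split_ifs
      · exact zero_le_one
      · exact le_trans (by positivity) (inv_pow_le_quadratic M (k - w) s hMpos)
    have hfac : ∀ k, pigeonFactor E w s (t0 + k + 1) c ≤ E * h k := by
      intro k
      have hE0 : 0 ≤ E := by linarith
      by_cases hk : k < w
      · simpa [h, hk] using pigeonFactor_le hE w s (t0 + k + 1) c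
      · obtain ⟨y, rfl⟩ := Nat.exists_eq_add_of_le (not_lt.mp hk)
        have hb : min 1 ((c : ℝ) / ((t0 + (w + y) + 1 : ℕ) : ℝ)) ≤ (M : ℝ) / (M + y) := by
          refine (min_le_right _ _).trans ?_
          rw [div_le_div_iff₀ (by positivity) (by positivity)]
          have h1 : (c : ℝ) ≤ t0 + w + 1 := by
            have : c ≤ t0 + w + 1 := by omega
            exact_mod_cast this
          have h2 : (t0 : ℝ) + w + 1 ≤ M := by
            have : t0 + w + 1 ≤ M := by omega
            exact_mod_cast this
          push_cast
          have hy : (0 : ℝ) ≤ y := by positivity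
          have hM0 : (0 : ℝ) ≤ M := by positivity
          nlinarith
        have hpow := (pow_le_pow_left₀ (by positivity) hb s).trans
          (inv_pow_le_quadratic M y s hMpos)
        have hnn : 0 ≤ (min 1 ((c : ℝ) / ((t0 + (w + y) + 1 : ℕ) : ℝ))) ^ s := by positivity
        have hk' : ¬ (w + y < w) := by omega
        have : w + y - w = y := by omega
        simp only [pigeonFactor, h, hk', if_false, this]
        refine mul_le_mul ?_ hpow hnn hE0
        split_ifs
        · exact le_rfl
        · exact hE
    have hsum : ∀ K, ∑ k ∈ range K, (1 / (a + 1)) * l ^ k * h k ≤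
        1 - l ^ w * ((s / M : ℝ) * a - (s / M : ℝ) ^ 2 * (a * (2 * a + 1))) := by
      intro K
      calc _ ≤ ∑ k ∈ range (w + K), (1 / (a + 1)) * l ^ k * h k := by
            refine sum_le_sum_of_subset_of_nonneg (range_mono (by omega)) ?_
            exact fun k _ _ => mul_nonneg (hp k) (hh0 k)
        _ = ∑ k ∈ range w, (1 / (a + 1)) * l ^ k + l ^ w * ∑ y ∈ range K, (1 / (a + 1)) * l ^ y *
              (1 - (s / M : ℝ) * y + (s / M : ℝ) ^ 2 * (y : ℝ) ^ 2) := by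
            rw [sum_range_add, mul_sum]
            congr 1
            · refine sum_congr rfl fun k hk => ?_
              simp [h, mem_range.mp hk]
            · refine sum_congr rfl fun y _ => ?_
              simp only [h, show ¬ (w + y < w) by omega, if_false, show w + y - w = y by omega]
              ring
        _ ≤ (1 - l ^ w) + l ^ w *
              (1 - (s / M : ℝ) * a + (s / M : ℝ) ^ 2 * (a * (2 * a + 1))) := by
            rw [geom_sum_eq_one_sub a ha w]
            gcongr
            exact geom_sum_quadratic_le a _ ha K
        _ = _ := by ring
    obtain ⟨K, rfl⟩ := Nat.exists_eq_add_of_le hX.le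
    rw [sum_range_add]
    have h1 : ∑ t ∈ range t0, (1 / (a + 1)) * l ^ t * pigeonFactor E w s (t + 1) c ≤
        1 - l ^ t0 := by
      rw [← geom_sum_eq_one_sub a ha t0]
      refine sum_le_sum fun t ht => ?_
      exact mul_le_of_le_one_right (hp t) (hsmall t (mem_range.mp ht))
    have h2 : ∑ k ∈ range K, (1 / (a + 1)) * l ^ (t0 + k) * pigeonFactor E w s (t0 + k + 1) c ≤
        l ^ t0 := by
      calc _ ≤ ∑ k ∈ range K, (l ^ t0 * E) * ((1 / (a + 1)) * l ^ k * h k) := by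
            refine sum_le_sum fun k _ => ?_
            calc _ ≤ (1 / (a + 1)) * l ^ (t0 + k) * (E * h k) :=
                  mul_le_mul_of_nonneg_left (hfac k) (hp _)
              _ = _ := by rw [pow_add]; ring
        _ = l ^ t0 * (E * ∑ k ∈ range K, ((1 / (a + 1)) * l ^ k * h k)) := by
            rw [← mul_sum]; ring
        _ ≤ l ^ t0 * 1 := by
            gcongr
            exact (mul_le_mul_of_nonneg_left (hsum K) (by linarith)).trans hE1
        _ = l ^ t0 := mul_one _
    linarith

/-- There are thresholds `D i ≤ X + 1` for which every heavy node has relative box size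
`∏ min 1 (c u i / D i)` below `1 / S`. For independent truncated geometric thresholds, the product
of the pigeon factors of each node has expectation at most `(1 + 1 / S) ^ S ≤ 3`, where `1 / S`
accounts for the truncation atom (`hE2`). So for some choice all products are at most `3 S`, and a
heavy node, which collects at least `w + 1` rewards `E`, must have a small box by `hE3`. -/
lemma exists_thresholds {ι : Type} [DecidableEq ι] [Fintype ι] {S : ℕ} (hS : 0 < S)
    (c : Fin S → ι → ℕ) (hcard : Fintype.card ι ≤ S) {E a : ℝ} (hE : 1 ≤ E) (ha : 0 < a)
    (w s M X : ℕ) (hM : X + w + 1 ≤ M)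
    (hE1 : E * (1 - (a / (a + 1)) ^ w *
      ((s / M : ℝ) * a - (s / M : ℝ) ^ 2 * (a * (2 * a + 1)))) ≤ 1)
    (hE2 : (a / (a + 1)) ^ X * E ≤ 1 / S) (hE3 : 3 * (S : ℝ) ^ (s + 1) < E ^ (w + 1)) :
    ∃ D : ι → ℕ, (∀ i, 1 ≤ D i ∧ D i ≤ X + 1) ∧
      ∀ u, w < (univ.filter fun i => c u i ≤ D i + w).card →
        (∏ i, min 1 ((c u i : ℝ) / D i)) * S < 1 := by
  set l : ℝ := a / (a + 1) with hl
  have hl0 : 0 ≤ l := by positivity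
  have hS' : (0 : ℝ) < S := by exact_mod_cast hS
  -- the truncated geometric distribution, with its remaining mass `l ^ X` placed at `X`
  let p : ℕ → ℝ := fun t => if t < X then (1 / (a + 1)) * l ^ t else l ^ X
  have hp0 : ∀ t, 0 ≤ p t := by
    intro t; simp only [p]; split_ifs <;> positivity
  have hsplit : ∀ g : ℕ → ℝ, ∑ t ∈ range (X + 1), p t * g t =
      ∑ t ∈ range X, (1 / (a + 1)) * l ^ t * g t + l ^ X * g X := by
    intro g
    rw [sum_range_succ]
    congr 1
    · exact sum_congr rfl fun t ht => by simp [p, mem_range.mp ht]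
    · simp [p]
  have hp1 : ∑ t ∈ range (X + 1), p t = 1 := by
    have := hsplit fun _ => 1
    simp only [mul_one] at this
    rw [this, geom_sum_eq_one_sub a ha X]; ring
  have hone : ∀ k : ℕ, ∑ t ∈ range (X + 1), p t * pigeonFactor E w s (t + 1) k ≤ 1 + 1 / S := by
    intro k
    rw [hsplit fun t => pigeonFactor E w s (t + 1) k]
    have h1 := sum_pigeonFactor_le hE ha w s M X k hM hE1
    have h2 := mul_le_mul_of_nonneg_left (pigeonFactor_le hE w s (X + 1) k) (pow_nonneg hl0 X)
    linarith
  have hthree : (1 + 1 / (S : ℝ)) ^ Fintype.card ι ≤ 3 := by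
    calc (1 + 1 / (S : ℝ)) ^ Fintype.card ι ≤ (1 + 1 / (S : ℝ)) ^ S := by
          refine pow_le_pow_right₀ ?_ hcard
          have : 0 ≤ 1 / (S : ℝ) := by positivity
          linarith
      _ ≤ (Real.exp (1 / S)) ^ S := by
          gcongr
          linarith [Real.add_one_le_exp (1 / (S : ℝ))]
      _ = Real.exp 1 := by rw [← Real.exp_nat_mul]; congr 1; field_simp
      _ ≤ 3 := by linarith [Real.exp_one_lt_d9]
  let T : Finset (ι → ℕ) := Fintype.piFinset fun _ => range (X + 1)
  have hW : ∑ x ∈ T, ∏ i, p (x i) = 1 := by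
    have := prod_univ_sum (fun _ : ι => range (X + 1)) (fun _ t => p t)
    rw [← this, prod_eq_one]
    exact fun _ _ => hp1
  have hu : ∀ u, ∑ x ∈ T, (∏ i, p (x i)) * ∏ i, pigeonFactor E w s (x i + 1) (c u i) ≤ 3 := by
    intro u
    have := prod_univ_sum (fun _ : ι => range (X + 1))
      (fun i t => p t * pigeonFactor E w s (t + 1) (c u i))
    simp only [prod_mul_distrib] at this
    rw [← this]
    refine le_trans (prod_le_prod (fun i _ => ?_) (fun i _ => hone (c u i))) ?_
    · exact sum_nonneg fun t _ => mul_nonneg (hp0 t) (pigeonFactor_nonneg hE _ _ _ _)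
    · rw [prod_const, card_univ]; exact hthree
  have htot : ∑ x ∈ T, (∏ i, p (x i)) * ∑ u, ∏ i, pigeonFactor E w s (x i + 1) (c u i) ≤
      ∑ x ∈ T, (∏ i, p (x i)) * (3 * S) := by
    rw [← sum_mul, hW, one_mul]
    simp only [mul_sum]
    rw [sum_comm]
    calc _ ≤ ∑ _u : Fin S, (3 : ℝ) := sum_le_sum fun u _ => hu u
      _ = 3 * S := by simp [mul_comm]
  obtain ⟨x, hxT, hx⟩ : ∃ x ∈ T, ∑ u, ∏ i, pigeonFactor E w s (x i + 1) (c u i) ≤ 3 * S := by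
    by_contra hcon
    push Not at hcon
    have hnn : ∀ x ∈ T, 0 ≤ ∏ i, p (x i) := fun x _ => prod_nonneg fun i _ => hp0 _
    obtain ⟨x, hxT, hxne⟩ : ∃ x ∈ T, ∏ i, p (x i) ≠ 0 := by
      refine exists_ne_zero_of_sum_ne_zero ?_
      rw [hW]; exact one_ne_zero
    refine absurd htot (not_le.mpr (sum_lt_sum (fun x hx => ?_) ⟨x, hxT, ?_⟩))
    · exact mul_le_mul_of_nonneg_left (hcon x hx).le (hnn x hx)
    · exact mul_lt_mul_of_pos_left (hcon x hxT) (lt_of_le_of_ne (hnn x hxT) hxne.symm)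
  refine ⟨fun i => x i + 1, fun i => ⟨Nat.le_add_left _ _, Nat.succ_le_succ ?_⟩, fun u hheavy => ?_⟩
  · have := mem_range.mp (Fintype.mem_piFinset.mp hxT i)
    omega
  · set R : ℝ := ∏ i, min 1 ((c u i : ℝ) / ((x i + 1 : ℕ) : ℝ)) with hR
    have hR0 : 0 ≤ R := prod_nonneg fun i _ => by positivity
    have h1 : ∏ i, pigeonFactor E w s (x i + 1) (c u i) ≤ 3 * S :=
      (single_le_sum (f := fun u => ∏ i, pigeonFactor E w s (x i + 1) (c u i))
        (fun v _ => prod_nonneg fun i _ => pigeonFactor_nonneg hE _ _ _ _) (mem_univ u)).trans hx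
    simp only [pigeonFactor, prod_mul_distrib, prod_pow, prod_ite, prod_const, one_pow,
      mul_one] at h1
    rw [← hR] at h1
    have h2 : E ^ (w + 1) * R ^ s ≤ 3 * S :=
      (mul_le_mul_of_nonneg_right (pow_le_pow_right₀ hE hheavy) (pow_nonneg hR0 s)).trans h1
    by_contra hge
    push Not at hge
    have h3 : 1 ≤ R ^ s * (S : ℝ) ^ s := by rw [← mul_pow]; exact one_le_pow₀ hge
    have h4 : E ^ (w + 1) ≤ 3 * (S : ℝ) ^ (s + 1) := by
      calc E ^ (w + 1) ≤ E ^ (w + 1) * (R ^ s * (S : ℝ) ^ s) :=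
            le_mul_of_one_le_right (by positivity) h3
        _ = (E ^ (w + 1) * R ^ s) * (S : ℝ) ^ s := by ring
        _ ≤ (3 * S) * (S : ℝ) ^ s := by gcongr
        _ = 3 * (S : ℝ) ^ (s + 1) := by ring
    linarith

end Filter

/-! ### Resolution refutations of the pigeonhole principle -/

section Resolution

open Finset

/-- The holes in which pigeon `i` may sit while the clause `C` is false: holes `j` such that `C` does
not contain `x_{i,j}` (which would have to be false) and contains no `¬x_{i',j}` with `i' ≠ i` (which
would put another pigeon into `j`). -/
def avail (n : ℕ) (C : Clause (ℕ × ℕ)) (i : ℕ) : Finset ℕ :=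
  (Icc 1 n).filter fun j => ((i, j), true) ∉ C ∧ ∀ l ∈ C, l.1.2 = j → l.2 = false → l.1.1 = i

/-- Falsifying `C` would put two different pigeons into one hole, as for any hole clause. -/
def HoleClash (C : Clause (ℕ × ℕ)) : Prop :=
  ∃ j i₁ i₂, i₁ ≠ i₂ ∧ ((i₁, j), false) ∈ C ∧ ((i₂, j), false) ∈ C

lemma mem_avail {n : ℕ} {C : Clause (ℕ × ℕ)} {i j : ℕ} : j ∈ avail n C i ↔
    j ∈ Icc 1 n ∧ ((i, j), true) ∉ C ∧ ∀ i', ((i', j), false) ∈ C → i' = i := by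
  simp only [avail, mem_filter]
  refine and_congr_right fun _ => and_congr_right fun _ => ?_
  constructor
  · intro h i' hi'
    exact h _ hi' rfl rfl
  · rintro h ⟨⟨i', j'⟩, b⟩ hl rfl rfl
    exact h i' hl

lemma avail_of_pos {n : ℕ} {C C' : Clause (ℕ × ℕ)} {i₀ j₀ i j : ℕ}
    (h : C' ⊆ insert ((i₀, j₀), true) C) (hj : j ∈ avail n C i) (hne : ¬ (i = i₀ ∧ j = j₀)) :
    j ∈ avail n C' i := by
  rw [mem_avail] at hj ⊢
  refine ⟨hj.1, fun hc => ?_, fun i' hi' => ?_⟩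
  · have := mem_insert.mp (h hc)
    simp only [Prod.mk.injEq, and_true] at this
    exact this.elim hne hj.2.1
  · have := mem_insert.mp (h hi')
    simp only [Prod.mk.injEq, Bool.false_eq_true, and_false, false_or] at this
    exact hj.2.2 i' this

lemma avail_of_neg {n : ℕ} {C C' : Clause (ℕ × ℕ)} {i₀ j₀ i j : ℕ}
    (h : C' ⊆ insert ((i₀, j₀), false) C) (hj : j ∈ avail n C i) (hne : i = i₀ ∨ j ≠ j₀) :
    j ∈ avail n C' i := by
  rw [mem_avail] at hj ⊢
  refine ⟨hj.1, fun hc => ?_, fun i' hi' => ?_⟩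
  · have := mem_insert.mp (h hc)
    simp only [Prod.mk.injEq, Bool.true_eq_false, and_false, false_or] at this
    exact hj.2.1 this
  · have := mem_insert.mp (h hi')
    simp only [Prod.mk.injEq, and_true] at this
    rcases this with ⟨rfl, rfl⟩ | this
    · rcases hne with rfl | hne
      · rfl
      · exact absurd rfl hne
    · exact hj.2.2 i' this

lemma card_le_card_add_one_of_forall {s t : Finset ℕ} (j₀ : ℕ)
    (h : ∀ j ∈ s, j ≠ j₀ → j ∈ t) : s.card ≤ t.card + 1 := by
  have : s ⊆ insert j₀ t := by
    intro j hj
    by_cases hj0 : j = j₀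
    · simp [hj0]
    · exact mem_insert_of_mem (h j hj hj0)
  exact (card_le_card this).trans (card_insert_le _ _)

lemma HoleClash.of_pos {C C' : Clause (ℕ × ℕ)} {i₀ j₀ : ℕ}
    (h : C' ⊆ insert ((i₀, j₀), true) C) (hC : HoleClash C') : HoleClash C := by
  obtain ⟨j, i₁, i₂, hne, h1, h2⟩ := hC
  refine ⟨j, i₁, i₂, hne, ?_, ?_⟩
  · simpa using h h1
  · simpa using h h2

lemma HoleClash.of_neg {n : ℕ} {C C' : Clause (ℕ × ℕ)} {i₀ j₀ : ℕ}
    (h : C' ⊆ insert ((i₀, j₀), false) C) (hav : j₀ ∈ avail n C i₀) (hC : HoleClash C') :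
    HoleClash C := by
  obtain ⟨j, i₁, i₂, hne, h1, h2⟩ := hC
  have hav' := (mem_avail.mp hav).2.2
  have e1 := mem_insert.mp (h h1)
  have e2 := mem_insert.mp (h h2)
  simp only [Prod.mk.injEq, and_true] at e1 e2
  rcases e1 with ⟨rfl, rfl⟩ | e1
  · rcases e2 with ⟨rfl, -⟩ | e2
    · exact absurd rfl hne
    · exact absurd (hav' _ e2).symm hne
  · rcases e2 with ⟨rfl, rfl⟩ | e2
    · exact absurd (hav' _ e1) hne
    · exact ⟨j, i₁, i₂, hne, e1, e2⟩

variable {m n : ℕ}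

open Classical in
/-- The pigeons whose pigeon clause occurs in the refutation. There are at most `P.size` of them, which
makes the bound independent of `m`. -/
noncomputable def usedPigeons (P : ResolutionProof (WPHPneg m n)) : Finset ℕ :=
  (Icc 1 m).filter fun i => ∃ u, P.clause u = pigeonClause n i

lemma mem_usedPigeons {P : ResolutionProof (WPHPneg m n)} {i : ℕ} :
    i ∈ usedPigeons P ↔ i ∈ Icc 1 m ∧ ∃ u, P.clause u = pigeonClause n i := by
  simp [usedPigeons]

lemma wphp_clause_cases {C : Clause (ℕ × ℕ)} (hC : C ∈ WPHPneg m n) :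
    (∃ i ∈ Icc 1 m, pigeonClause n i = C) ∨
      ∃ i₁ i₂ j, i₁ < i₂ ∧ holeClause j i₁ i₂ = C := by
  rw [WPHPneg, mem_union, mem_image, mem_image] at hC
  rcases hC with h | ⟨⟨i₁, i₂, j⟩, ht, he⟩
  · exact Or.inl h
  · exact Or.inr ⟨i₁, i₂, j, (mem_filter.mp ht).2, he⟩

lemma card_usedPigeons_le (hn : 1 ≤ n) (P : ResolutionProof (WPHPneg m n)) :
    (usedPigeons P).card ≤ P.size := by
  classical
  have h : ∀ i : usedPigeons P, ∃ u, P.clause u = pigeonClause n i := by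
    exact fun i => (mem_usedPigeons.mp i.2).2
  choose g hg using h
  have hinj : Function.Injective g := by
    intro i k hik
    have h1 : pigeonClause n i = pigeonClause n k := by rw [← hg i, ← hg k, hik]
    have h2 : (((i : ℕ), 1), true) ∈ pigeonClause n i := by
      simp only [pigeonClause, mem_image]
      exact ⟨1, by simp [hn], rfl⟩
    rw [h1] at h2
    simp only [pigeonClause, mem_image, Prod.mk.injEq] at h2
    obtain ⟨_, _, ⟨h, _⟩, _⟩ := h2
    exact Subtype.ext h.symm
  simpa using Fintype.card_le_of_injective g hinj

/-- A refutation satisfies the move condition of `game_lower_bound`. Axioms are pigeon clauses, with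
an empty list, or hole clauses, with a clash. At a resolution on `x_{i₀,j₀}`, a placement goes to the
premise containing `¬x_{i₀,j₀}` if it puts `i₀` into `j₀`, and to the other premise if not; only the
hole `j₀` can disappear from the lists. -/
lemma resolution_move (P : ResolutionProof (WPHPneg m n)) (u : Fin P.size)
    (hu : ¬ HoleClash (P.clause u)) :
    (∃ i : usedPigeons P, avail n (P.clause u) i = ∅) ∨
    ∀ (K : Finset (usedPigeons P)) (y : usedPigeons P → ℚ),
      (∀ i ∈ K, y i ∈ (avail n (P.clause u) i).image (fun j : ℕ => (j : ℚ))) →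
      Set.InjOn y K →
        ∃ v, v < u ∧ ¬ HoleClash (P.clause v) ∧
          (∀ i ∈ K, y i ∈ (avail n (P.clause v) i).image (fun j : ℕ => (j : ℚ))) ∧
          ∀ i : usedPigeons P,
            (avail n (P.clause u) i).card ≤ (avail n (P.clause v) i).card + 1 := by
  classical
  rcases hst : P.step u with _ | ⟨⟨i₀, j₀⟩, a, b⟩
  · left
    rcases wphp_clause_cases (ResolutionProof.step_axiom P u hst) with ⟨i, hi, he⟩ | ⟨i₁, i₂, j, hlt, he⟩
    · refine ⟨⟨i, mem_usedPigeons.mpr ⟨hi, u, he.symm⟩⟩, ?_⟩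
      · refine eq_empty_of_forall_notMem fun j hj => ?_
        rw [mem_avail] at hj
        exact hj.2.1 (he.subset (mem_image.mpr ⟨j, hj.1, rfl⟩))
    · refine absurd ⟨j, i₁, i₂, ne_of_lt hlt, ?_, ?_⟩ hu
      · rw [← he]; simp [holeClause]
      · rw [← he]; simp [holeClause]
  · right
    intro K y hy hinj
    obtain ⟨hau, hbu⟩ := P.step_lt u _ a b hst
    obtain ⟨hxa, hxb, hcl⟩ := P.step_res u _ a b hst
    have hsa : P.clause a ⊆ insert ((i₀, j₀), true) (P.clause u) := by
      intro l hl
      by_cases h : l = ((i₀, j₀), true)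
      · simp [h]
      · refine mem_insert_of_mem ?_
        rw [hcl]
        exact mem_union_left _ (mem_erase.mpr ⟨h, hl⟩)
    have hsb : P.clause b ⊆ insert ((i₀, j₀), false) (P.clause u) := by
      intro l hl
      by_cases h : l = ((i₀, j₀), false)
      · simp [h]
      · refine mem_insert_of_mem ?_
        rw [hcl]
        exact mem_union_right _ (mem_erase.mpr ⟨h, hl⟩)
    by_cases hq : ∃ k ∈ K, (k : ℕ) = i₀ ∧ y k = j₀
    · obtain ⟨k, hkK, hk, hyk⟩ := hq
      refine ⟨b, hbu, fun hc => hu (hc.of_neg (n := n) hsb ?_), fun i hi => ?_, fun i => ?_⟩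
      · obtain ⟨j, hj, hje⟩ := mem_image.mp (hy k hkK)
        rw [hyk] at hje
        have : j = j₀ := by exact_mod_cast hje
        rw [← hk, ← this]; exact hj
      · obtain ⟨j, hj, hje⟩ := mem_image.mp (hy i hi)
        refine mem_image.mpr ⟨j, avail_of_neg hsb hj ?_, hje⟩
        by_cases hjj : j = j₀
        · left
          have : i = k := hinj hi hkK (by rw [hyk, ← hje, hjj])
          rw [this, hk]
        · exact Or.inr hjj
      · exact card_le_card_add_one_of_forall j₀ fun j hj hne => avail_of_neg hsb hj (Or.inr hne)
    · refine ⟨a, hau, fun hc => hu (hc.of_pos hsa), fun i hi => ?_, fun i => ?_⟩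
      · obtain ⟨j, hj, hje⟩ := mem_image.mp (hy i hi)
        refine mem_image.mpr ⟨j, avail_of_pos hsa hj ?_, hje⟩
        rintro ⟨h1, rfl⟩
        exact hq ⟨i, hi, h1, hje.symm⟩
      · exact card_le_card_add_one_of_forall j₀ fun j hj hne =>
          avail_of_pos hsa hj fun h => hne h.2

/-- Combination of `exists_thresholds`, which makes the boxes of all heavy clauses small, with
`game_lower_bound`, which forbids this. -/
lemma resolution_lower_bound (hn : 1 ≤ n) (P : ResolutionProof (WPHPneg m n)) {E a : ℝ}
    (hE : 1 ≤ E) (ha : 0 < a) (w s M X : ℕ) (hM : X + w + 1 ≤ M) (hXn : X + 1 + w < n)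
    (hE1 : E * (1 - (a / (a + 1)) ^ w *
      ((s / M : ℝ) * a - (s / M : ℝ) ^ 2 * (a * (2 * a + 1)))) ≤ 1)
    (hE2 : (a / (a + 1)) ^ X * E ≤ 1 / P.size)
    (hE3 : 3 * (P.size : ℝ) ^ (s + 1) < E ^ (w + 1)) : False := by
  classical
  obtain ⟨D, hD, hheavy⟩ := exists_thresholds (ι := usedPigeons P) P.size_pos
    (fun u i => (avail n (P.clause u) i).card)
    (by simpa using card_usedPigeons_le hn P) hE ha w s M X hM hE1 hE2 hE3
  have hci : ∀ (u : Fin P.size) (i : usedPigeons P),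
      ((avail n (P.clause u) i).image (fun j : ℕ => (j : ℚ))).card =
        (avail n (P.clause u) i).card :=
    fun u i => card_image_of_injective _ Nat.cast_injective
  have hroot : P.clause P.root = ∅ := P.last_empty
  have hS : (0 : ℝ) < P.size := by exact_mod_cast P.size_pos
  refine game_lower_bound
    (fun u (i : usedPigeons P) => (avail n (P.clause u) i).image (fun j : ℕ => (j : ℚ)))
    (fun u => HoleClash (P.clause u)) D w P.root ?_ ?_ ?_ ?_
  · intro u hu
    simp only [hci, image_eq_empty]
    exact resolution_move P u hu
  · rw [hroot]
    rintro ⟨j, i₁, i₂, -, h, -⟩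
    simp at h
  · intro i
    rw [hci, hroot]
    have : avail n ∅ i = Icc 1 n := by ext j; simp [mem_avail]
    rw [this, Nat.card_Icc]
    have := (hD i).2
    omega
  · simp only [hci]
    have hDpos : (0 : ℝ) < ∏ i, (D i : ℝ) :=
      prod_pos fun i _ => by exact_mod_cast (hD i).1
    have hterm : ∀ v ∈ univ.filter (fun v : Fin P.size =>
        w < (univ.filter fun i : usedPigeons P => (avail n (P.clause v) i).card ≤ D i + w).card),
        (∏ i : usedPigeons P, (min (avail n (P.clause v) i).card (D i) : ℝ)) <
          (∏ i, (D i : ℝ)) / P.size := by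
      intro v hv
      have h1 := hheavy v (mem_filter.mp hv).2
      have h2 : (∏ i : usedPigeons P, (min (avail n (P.clause v) i).card (D i) : ℝ)) =
          (∏ i : usedPigeons P, min 1 (((avail n (P.clause v) i).card : ℝ) / D i)) *
            ∏ i, (D i : ℝ) := by
        rw [← prod_mul_distrib]
        refine prod_congr rfl fun i _ => ?_
        have hd : (0 : ℝ) < D i := by exact_mod_cast (hD i).1
        rw [min_mul_of_nonneg _ _ hd.le, one_mul, div_mul_cancel₀ _ hd.ne', min_comm]
      rw [h2, lt_div_iff₀ hS]
      calc _ = (∏ i : usedPigeons P, min 1 (((avail n (P.clause v) i).card : ℝ) / D i)) *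
            P.size * ∏ i, (D i : ℝ) := by ring
        _ < 1 * ∏ i, (D i : ℝ) := by gcongr
        _ = _ := one_mul _
    have hreal : (∑ v ∈ univ.filter (fun v : Fin P.size =>
        w < (univ.filter fun i : usedPigeons P => (avail n (P.clause v) i).card ≤ D i + w).card),
        ∏ i : usedPigeons P, (min (avail n (P.clause v) i).card (D i) : ℝ)) <
          ∏ i, (D i : ℝ) := by
      rcases (univ.filter (fun v : Fin P.size => w < (univ.filter fun i : usedPigeons P =>
        (avail n (P.clause v) i).card ≤ D i + w).card)).eq_empty_or_nonempty with h0 | hne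
      · rw [h0, sum_empty]; exact hDpos
      · refine (sum_lt_sum_of_nonempty hne hterm).trans_le ?_
        rw [sum_const, nsmul_eq_mul]
        have hle : ((univ.filter (fun v : Fin P.size => w < (univ.filter fun i : usedPigeons P =>
            (avail n (P.clause v) i).card ≤ D i + w).card)).card : ℝ) ≤ P.size := by
          exact_mod_cast (card_le_univ _).trans_eq (Fintype.card_fin _)
        calc _ ≤ (P.size : ℝ) * ((∏ i, (D i : ℝ)) / P.size) := by gcongr
          _ = _ := by field_simp
    exact_mod_cast hreal

end Resolution

/-! ### Numerical estimates -/

section Numerics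

/-- With `τ = s / M = 1 / (10 ^ 6 r ^ 2)` and `a = w = 14300 r ^ 2` one has `τ a = 0.0143` and
`(a / (a + 1)) ^ w ≥ 1 / e`, so the reward `E = exp 0.0049` is affordable. -/
lemma numeric_E1 (r : ℕ) (hr : 1 ≤ r) (a : ℝ) (ha : a = 14300 * (r : ℝ) ^ 2) :
    Real.exp (49 / 10000) * (1 - (a / (a + 1)) ^ (14300 * r ^ 2) *
      (((r : ℕ) / ((10 ^ 6 * r ^ 3 : ℕ) : ℝ) : ℝ) * a -
        ((r : ℕ) / ((10 ^ 6 * r ^ 3 : ℕ) : ℝ) : ℝ) ^ 2 * (a * (2 * a + 1)))) ≤ 1 := by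
  have hr' : (1 : ℝ) ≤ r := by exact_mod_cast hr
  have hr2 : (1 : ℝ) ≤ (r : ℝ) ^ 2 := one_le_pow₀ hr'
  have ha0 : 0 < a := by rw [ha]; positivity
  set x : ℝ := ((r : ℕ) / ((10 ^ 6 * r ^ 3 : ℕ) : ℝ) : ℝ) * a -
        ((r : ℕ) / ((10 ^ 6 * r ^ 3 : ℕ) : ℝ) : ℝ) ^ 2 * (a * (2 * a + 1)) with hx
  have hτ : ((r : ℕ) / ((10 ^ 6 * r ^ 3 : ℕ) : ℝ) : ℝ) = 1 / (10 ^ 6 * (r : ℝ) ^ 2) := by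
    push_cast; field_simp; norm_num
  have hx' : x = 143 / 10000 - 2 * (143 / 10000) ^ 2 - 143 / 10 ^ 10 / (r : ℝ) ^ 2 := by
    rw [hx, hτ, ha]; field_simp; ring
  have hxge : (138 / 10000 : ℝ) ≤ x := by
    have : 143 / 10 ^ 10 / (r : ℝ) ^ 2 ≤ 143 / 10 ^ 10 := div_le_self (by norm_num) hr2
    rw [hx']; linarith
  have hpow : (36 / 100 : ℝ) ≤ (a / (a + 1)) ^ (14300 * r ^ 2) := by
    have h1 : Real.exp (-(1 / a)) ≤ a / (a + 1) := by
      rw [Real.exp_neg, inv_le_comm₀ (Real.exp_pos _) (by positivity)]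
      have := Real.add_one_le_exp (1 / a)
      have h2 : (a / (a + 1))⁻¹ = 1 / a + 1 := by field_simp; ring
      rw [h2]; exact this
    calc (36 / 100 : ℝ) ≤ Real.exp (-1) := by
          rw [Real.exp_neg, le_inv_comm₀ (by norm_num) (Real.exp_pos _)]
          linarith [Real.exp_one_lt_d9]
      _ = (Real.exp (-(1 / a))) ^ (14300 * r ^ 2) := by
          rw [← Real.exp_nat_mul]
          congr 1
          push_cast
          rw [ha]; field_simp
      _ ≤ _ := by gcongr
  set q := (a / (a + 1)) ^ (14300 * r ^ 2)
  have hb : (49 / 10000 : ℝ) ≤ q * x := by nlinarith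
  have h3 : 1 - q * x ≤ Real.exp (-(49 / 10000)) := by
    have := Real.add_one_le_exp (-(49 / 10000) : ℝ)
    linarith
  calc _ ≤ Real.exp (49 / 10000) * Real.exp (-(49 / 10000)) := by gcongr
    _ = 1 := by rw [← Real.exp_add]; simp

lemma pow_two_le_exp (k : ℕ) : (2 : ℝ) ^ k ≤ Real.exp (k * (6932 / 10000)) := by
  rw [Real.exp_nat_mul]
  gcongr
  rw [← Real.exp_log (show (0 : ℝ) < 2 by norm_num)]
  exact Real.exp_le_exp.mpr (by linarith [Real.log_two_lt_d9])

/-- The truncation atom: `X / a` is about `70 r`, more than `log S ≤ (100 r + 100) log 2`. -/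
lemma numeric_E2 (r S X : ℕ) (hr : 1000 ≤ r) (a : ℝ) (ha : a = 14300 * (r : ℝ) ^ 2)
    (hS : 0 < S) (hS2 : (S : ℝ) ≤ 2 ^ (100 * r + 100))
    (hX : X + 14300 * r ^ 2 + 2 = 10 ^ 6 * r ^ 3) :
    (a / (a + 1)) ^ X * Real.exp (49 / 10000) ≤ 1 / S := by
  have hr' : (1000 : ℝ) ≤ r := by exact_mod_cast hr
  have hS' : (0 : ℝ) < S := by exact_mod_cast hS
  have ha0 : 0 < a := by rw [ha]; positivity
  have h1 : a / (a + 1) ≤ Real.exp (-(1 / (a + 1))) := by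
    have := Real.add_one_le_exp (-(1 / (a + 1)))
    have h2 : a / (a + 1) = -(1 / (a + 1)) + 1 := by field_simp; ring
    rw [h2]; exact this
  have hXr : (X : ℝ) = 10 ^ 6 * (r : ℝ) ^ 3 - 14300 * (r : ℝ) ^ 2 - 2 := by
    have : (X : ℝ) + 14300 * (r : ℝ) ^ 2 + 2 = 10 ^ 6 * (r : ℝ) ^ 3 := by exact_mod_cast hX
    linarith
  rw [le_div_iff₀ hS']
  calc _ ≤ (Real.exp (-(1 / (a + 1)))) ^ X * Real.exp (49 / 10000) * 2 ^ (100 * r + 100) := by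
        gcongr
    _ ≤ (Real.exp (-(1 / (a + 1)))) ^ X * Real.exp (49 / 10000) *
          Real.exp ((100 * r + 100 : ℕ) * (6932 / 10000)) := by
        gcongr
        exact pow_two_le_exp _
    _ = Real.exp (-(X / (a + 1)) + 49 / 10000 + (100 * r + 100) * (6932 / 10000)) := by
        rw [← Real.exp_nat_mul, ← Real.exp_add, ← Real.exp_add]
        congr 1
        push_cast
        ring
    _ ≤ 1 := by
        rw [Real.exp_le_one_iff]
        have : 49 / 10000 + (100 * r + 100) * (6932 / 10000) ≤ X / (a + 1) := by
          rw [le_div_iff₀ (by positivity), hXr, ha]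
          nlinarith [mul_nonneg (sq_nonneg (r : ℝ)) (sub_nonneg.mpr hr')]
        linarith

/-- `E ^ w = exp (70.07 r ^ 2)` beats `S ^ (r + 1)`, which is about `exp (69.32 r ^ 2)`. -/
lemma numeric_E3 (r S : ℕ) (hr : 1000 ≤ r) (hS2 : (S : ℝ) ≤ 2 ^ (100 * r + 100)) :
    3 * (S : ℝ) ^ (r + 1) < Real.exp (49 / 10000) ^ (14300 * r ^ 2 + 1) := by
  have hr' : (1000 : ℝ) ≤ r := by exact_mod_cast hr
  have h3 : (3 : ℝ) ≤ Real.exp 2 := by linarith [Real.add_one_le_exp (2 : ℝ)]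
  calc 3 * (S : ℝ) ^ (r + 1) ≤
        Real.exp 2 * (Real.exp ((100 * r + 100 : ℕ) * (6932 / 10000))) ^ (r + 1) := by
        gcongr
        exact hS2.trans (pow_two_le_exp _)
    _ = Real.exp (2 + (r + 1) * ((100 * r + 100) * (6932 / 10000))) := by
        rw [← Real.exp_nat_mul, ← Real.exp_add]
        congr 1
        push_cast
        ring
    _ < Real.exp ((14300 * r ^ 2 + 1) * (49 / 10000)) := by
        rw [Real.exp_lt_exp]
        nlinarith
    _ = _ := by
        rw [← Real.exp_nat_mul]
        congr 1
        push_cast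
        ring

end Numerics

/-- Razborov: there is a constant `c > 0` such that for every
`n ≥ 1` and every `m ≥ n+1`, every Resolution refutation of `¬WPHP^m_n` has
length at least `c · 2^{n^{1/3}}`. -/
theorem razborov_wphp_lower_bound :
    ∃ c : ℝ, 0 < c ∧ ∀ n : ℕ, 1 ≤ n → ∀ m : ℕ, n + 1 ≤ m →
      ∀ P : ResolutionProof (WPHPneg m n),
        c * (2 : ℝ) ^ ((n : ℝ) ^ ((1 : ℝ) / 3)) ≤ (P.size : ℝ) := by
  refine ⟨(2 : ℝ) ^ (-(100200 : ℝ)), by positivity, ?_⟩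
  intro n hn m _ P
  set x : ℝ := (n : ℝ) ^ ((1 : ℝ) / 3) with hx
  have hx0 : 0 ≤ x := by positivity
  have hx3 : x ^ 3 = n := by
    rw [hx, ← Real.rpow_natCast, ← Real.rpow_mul (by positivity)]
    norm_num
  have hS1 : (1 : ℝ) ≤ P.size := by exact_mod_cast P.size_pos
  rw [← Real.rpow_add (by norm_num)]
  -- the constant makes the bound trivial for `x ≤ 100200`, and otherwise gives room for rounding `r`
  rcases le_or_gt x 100200 with hsmall | hbig
  · refine le_trans ?_ hS1
    exact Real.rpow_le_one_of_one_le_of_nonpos (by norm_num) (by linarith)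
  by_contra hlt
  push Not at hlt
  set r : ℕ := ⌊x / 100⌋₊ with hr
  have hr1 : (r : ℝ) ≤ x / 100 := Nat.floor_le (by positivity)
  have hr2 : x / 100 < r + 1 := Nat.lt_floor_add_one _
  have hr1000 : 1000 ≤ r := Nat.le_floor (by push_cast; linarith)
  have hS2 : (P.size : ℝ) ≤ 2 ^ (100 * r + 100) := by
    refine hlt.le.trans ?_
    rw [← Real.rpow_natCast]
    refine Real.rpow_le_rpow_of_exponent_le (by norm_num) ?_
    push_cast
    linarith
  have hMn : 10 ^ 6 * r ^ 3 ≤ n := by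
    have : (10 ^ 6 * r ^ 3 : ℝ) ≤ n := by
      rw [← hx3]
      calc (10 ^ 6 * r ^ 3 : ℝ) = (100 * r) ^ 3 := by ring
        _ ≤ x ^ 3 := by gcongr; linarith
    exact_mod_cast this
  obtain ⟨X, hX⟩ : ∃ X, X + 14300 * r ^ 2 + 2 = 10 ^ 6 * r ^ 3 := by
    refine ⟨10 ^ 6 * r ^ 3 - (14300 * r ^ 2 + 2), ?_⟩
    have : 14300 * r ^ 2 + 2 ≤ 10 ^ 6 * r ^ 3 := by
      have h1 : 1 ≤ r ^ 2 := Nat.one_le_pow _ _ (by omega)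
      have h2 : r ^ 3 = r ^ 2 * r := pow_succ r 2
      nlinarith
    omega
  exact resolution_lower_bound hn P (Real.one_le_exp (by norm_num : (0 : ℝ) ≤ 49 / 10000))
    (by positivity) (14300 * r ^ 2) r (10 ^ 6 * r ^ 3) X (by omega) (by omega)
    (numeric_E1 r (by omega) _ rfl) (numeric_E2 r P.size X hr1000 _ rfl P.size_pos hS2 hX)
    (numeric_E3 r P.size hr1000 hS2)
end
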